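/- The Riemann hypothesis holds if and only if there exists a constant C > 0 such that for all real x ≥ 2, |π(x) − Li(x)| ≤ C·√x·log x (von Koch's theorem). -/

import Mathlib

/-- The prime counting function `π(x)`: the number of primes `p ≤ x`, as a real number. -/
noncomputable def primePi (x : ℝ) : ℝ :=
  (((Finset.range (⌊x⌋₊ + 1)).filter Nat.Prime).card : ℝ)

/-- The logarithmic integral `Li(x) = ∫₂^x dt / log t`. -/
noncomputable def Li (x : ℝ) : ℝ := ∫ t in (2:ℝ)..x, 1 / Real.log t

/-!
Partial summation turns von Koch's bound for `π` into `ψ(x) - x = O(√x log² x)`.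

This bound makes `∫₁^∞ (ψ(t) - t) t^(-s-1) dt` analytic for `Re s > 1/2`. As `ζ'/ζ` is expressible
through this integral for `Re s > 1`, `(s - 1) ζ(s)` has no zeros with `Re s > 1/2`, and the
functional equation gives the Riemann hypothesis.

Conversely, average the error term over the logarithmic window `[u, u + e^(-u/2)]` and write the
average as the integral of the Mellin transform of `ψ(t) - t` against an explicit kernel over a
vertical line. Under the Riemann hypothesis the line moves to `Re s = 1/2 + 1/u`. The integral
against the reflected kernel vanishes, and adding it replaces the transform by its real part. By
Landau's lemma that real part is, up to `O(log t)`, a sum of Poisson kernels, one for each zero, so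
its mean over unit intervals is `O(log t)` uniformly up to the critical line. This gives
`O(e^(u/2) u²)` for the average, and the monotonicity of `ψ` removes the averaging.
-/

namespace VonKoch

/-! ### Partial summation -/

section PartialSummation

open Real Set Filter MeasureTheory intervalIntegral Asymptotics

lemma primePi_eq_primeCounting (x : ℝ) : primePi x = Nat.primeCounting ⌊x⌋₊ := by
  rw [primePi, Nat.primeCounting, Nat.primeCounting', Nat.count_eq_card_filter_range]

lemma monotone_primePi : Monotone primePi := fun x y hxy => by
  simp only [primePi_eq_primeCounting, Nat.cast_le]
  exact Nat.monotone_primeCounting (Nat.floor_mono hxy)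

lemma half_lt_log {x : ℝ} (hx : 2 ≤ x) : 1 / 2 < log x := by
  have hmono : log 2 ≤ log x := log_le_log two_pos hx
  linarith [log_two_gt_d9]

lemma continuousOn_one_div_log : ContinuousOn (fun t : ℝ => 1 / log t) (Ici 2) :=
  continuousOn_const.div (continuousOn_log.mono fun t (ht : 2 ≤ t) => (two_pos.trans_le ht).ne')
    fun t ht => by linarith [half_lt_log ht]

lemma intervalIntegrable_one_div_log {x : ℝ} (hx : 2 ≤ x) :
    IntervalIntegrable (fun t : ℝ => 1 / log t) volume 2 x :=
  (continuousOn_one_div_log.mono (by rw [uIcc_of_le hx]; exact Icc_subset_Ici_self))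
    |>.intervalIntegrable

lemma Li_eq_div_log_add_integral {x : ℝ} (hx : 2 ≤ x) :
    Li x = x / log x - 2 / log 2 + ∫ t in (2:ℝ)..x, 1 / log t ^ 2 := by
  have hint := intervalIntegrable_one_div_log hx
  have hint_sq := Chebyshev.intervalIntegrable_one_div_log_sq (a := 2) (b := x) one_lt_two
    (by linarith)
  have hparts : ∫ t in (2:ℝ)..x, (1 / log t - 1 / log t ^ 2) = x / log x - 2 / log 2 := by
    refine integral_eq_sub_of_hasDerivAt (f := fun t => t / log t) (fun t ht => ?_)
      (hint.sub hint_sq)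
    rw [uIcc_of_le hx] at ht
    have hlog : log t ≠ 0 := by linarith [half_lt_log ht.1]
    have ht0 : t ≠ 0 := by linarith [ht.1]
    convert! (hasDerivAt_id t).div (hasDerivAt_log ht0) hlog using 1
    simp only [id]
    field_simp
  rw [intervalIntegral.integral_sub hint hint_sq] at hparts
  rw [Li]
  linarith

lemma hasDerivAt_Li {x : ℝ} (hx : 2 < x) : HasDerivAt Li (1 / log x) x := by
  refine integral_hasDerivAt_right (intervalIntegrable_one_div_log hx.le) ?_
    (continuousOn_one_div_log.continuousAt (Ici_mem_nhds hx))
  exact (by fun_prop : Measurable fun t : ℝ => 1 / log t).stronglyMeasurable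
    |>.stronglyMeasurableAtFilter

lemma continuousOn_Li {x : ℝ} (hx : 2 ≤ x) : ContinuousOn Li (Icc 2 x) := by
  have h := continuousOn_primitive_interval' (intervalIntegrable_one_div_log hx) left_mem_uIcc
  rwa [uIcc_of_le hx] at h

lemma intervalIntegrable_Li_div {x : ℝ} (hx : 2 ≤ x) :
    IntervalIntegrable (fun t => Li t / t) volume 2 x := by
  refine ContinuousOn.intervalIntegrable ?_
  rw [uIcc_of_le hx]
  exact (continuousOn_Li hx).div continuousOn_id fun t ht => (two_pos.trans_le ht.1).ne'

lemma integral_Li_div {x : ℝ} (hx : 2 ≤ x) :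
    ∫ t in (2:ℝ)..x, Li t / t = Li x * log x - (x - 2) := by
  have hprim : ∫ t in (2:ℝ)..x, Li t / t = (Li x * log x - x) - (Li 2 * log 2 - 2) := by
    refine integral_eq_sub_of_hasDeriv_right_of_le hx (f := fun t => Li t * log t - t) ?_
      (fun t ht => ?_) (intervalIntegrable_Li_div hx)
    · refine ((continuousOn_Li hx).mul (continuousOn_log.mono fun t ht => ?_)).sub continuousOn_id
      exact (two_pos.trans_le ht.1).ne'
    · have hlog : log t ≠ 0 := by linarith [half_lt_log ht.1.le]
      have ht0 : t ≠ 0 := by linarith [ht.1]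
      refine HasDerivAt.hasDerivWithinAt ?_
      convert! ((hasDerivAt_Li ht.1).mul (hasDerivAt_log ht0)).sub (hasDerivAt_id t) using 1
      field_simp
      ring
  have hLi_two : Li 2 = 0 := integral_same
  rw [hprim, hLi_two]
  ring

lemma intervalIntegrable_primePi_div {x : ℝ} (hx : 2 ≤ x) :
    IntervalIntegrable (fun t => primePi t / t) volume 2 x := by
  simp only [div_eq_mul_inv]
  refine monotone_primePi.intervalIntegrable.mul_continuousOn ?_
  rw [uIcc_of_le hx]
  exact continuousOn_inv₀.mono fun t ht => (two_pos.trans_le ht.1).ne'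

lemma primePi_sub_Li_eq {x : ℝ} (hx : 2 ≤ x) :
    primePi x - Li x = (Chebyshev.theta x - x) / log x +
      (∫ t in (2:ℝ)..x, (Chebyshev.theta t - t) / (t * log t ^ 2)) + 2 / log 2 := by
  have hint_theta :
      IntervalIntegrable (fun t => Chebyshev.theta t / (t * log t ^ 2)) volume 2 x := by
    rw [intervalIntegrable_iff_integrableOn_Icc_of_le hx]
    exact Chebyshev.integrableOn_theta_div_id_mul_log_sq x
  have hint_sq := Chebyshev.intervalIntegrable_one_div_log_sq (a := 2) (b := x) one_lt_two
    (by linarith)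
  have hsplit : ∫ t in (2:ℝ)..x, (Chebyshev.theta t - t) / (t * log t ^ 2) =
      ∫ t in (2:ℝ)..x, (Chebyshev.theta t / (t * log t ^ 2) - 1 / log t ^ 2) := by
    refine integral_congr fun t ht => ?_
    rw [uIcc_of_le hx] at ht
    have hlog : log t ≠ 0 := by linarith [half_lt_log ht.1]
    have ht0 : t ≠ 0 := by linarith [ht.1]
    field_simp
  rw [primePi_eq_primeCounting, Chebyshev.primeCounting_eq_theta_div_log_add_integral hx,
    Li_eq_div_log_add_integral hx, hsplit, intervalIntegral.integral_sub hint_theta hint_sq]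
  ring

lemma theta_sub_self_eq {x : ℝ} (hx : 2 ≤ x) :
    Chebyshev.theta x - x =
      (primePi x - Li x) * log x - (∫ t in (2:ℝ)..x, (primePi t - Li t) / t) - 2 := by
  simp only [sub_div]
  rw [intervalIntegral.integral_sub (intervalIntegrable_primePi_div hx)
    (intervalIntegrable_Li_div hx), integral_Li_div hx,
    Chebyshev.theta_eq_primeCounting_mul_log_sub_integral hx]
  simp only [primePi_eq_primeCounting]
  ring

lemma intervalIntegrable_one_div_sqrt {x : ℝ} (hx : 2 ≤ x) :
    IntervalIntegrable (fun t => 1 / √t) volume 2 x := by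
  refine ContinuousOn.intervalIntegrable (continuousOn_const.div (by fun_prop) fun t ht => ?_)
  rw [uIcc_of_le hx] at ht
  exact (sqrt_pos.2 (by linarith [ht.1])).ne'

lemma integral_one_div_sqrt_le {x : ℝ} (hx : 2 ≤ x) : ∫ t in (2:ℝ)..x, 1 / √t ≤ 2 * √x := by
  have hprim : ∫ t in (2:ℝ)..x, 1 / √t = 2 * √x - 2 * √2 := by
    refine integral_eq_sub_of_hasDerivAt (f := fun t => 2 * √t) (fun t ht => ?_)
      (intervalIntegrable_one_div_sqrt hx)
    rw [uIcc_of_le hx] at ht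
    convert! (hasDerivAt_sqrt (by linarith [ht.1] : t ≠ 0)).const_mul 2 using 1
    field_simp
  linarith [sqrt_nonneg 2]

lemma isBigO_integral_of_isBigO_div_sqrt {f g : ℝ → ℝ} (hg : MonotoneOn g (Ici 2))
    (hg0 : 0 ≤ g 2) (h : f =O[𝓟 (Ici 2)] fun t => g t / √t) :
    (fun x => ∫ t in (2:ℝ)..x, f t) =O[𝓟 (Ici 2)] fun x => √x * g x := by
  obtain ⟨C, hC0, hC⟩ := h.exists_nonneg
  rw [isBigOWith_principal] at hC
  refine isBigO_principal.2 ⟨2 * C, fun x (hx : 2 ≤ x) => ?_⟩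
  have hg_nonneg {t : ℝ} (ht : 2 ≤ t) : 0 ≤ g t := hg0.trans (hg self_mem_Ici ht ht)
  have hbound : ‖∫ t in (2:ℝ)..x, f t‖ ≤ ∫ t in (2:ℝ)..x, C * g x * (1 / √t) := by
    refine norm_integral_le_of_norm_le hx (Eventually.of_forall fun t ht => ?_)
      ((intervalIntegrable_one_div_sqrt hx).const_mul _)
    calc ‖f t‖ ≤ C * ‖g t / √t‖ := hC t ht.1.le
      _ = C * g t * (1 / √t) := by
        rw [norm_of_nonneg (div_nonneg (hg_nonneg ht.1.le) (sqrt_nonneg t))]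
        ring
      _ ≤ C * g x * (1 / √t) := by
        gcongr
        exact hg ht.1.le hx ht.2
  have hgx := hg_nonneg hx
  calc ‖∫ t in (2:ℝ)..x, f t‖ ≤ C * g x * ∫ t in (2:ℝ)..x, 1 / √t := by
        rwa [intervalIntegral.integral_const_mul] at hbound
    _ ≤ C * g x * (2 * √x) := by gcongr; exact integral_one_div_sqrt_le hx
    _ = 2 * C * ‖√x * g x‖ := by rw [norm_of_nonneg (by positivity)]; ring

lemma isBigO_const_sqrt_mul_log (c : ℝ) :
    (fun _ : ℝ => c) =O[𝓟 (Ici 2)] fun x => √x * log x := by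
  refine isBigO_principal.2 ⟨2 * ‖c‖, fun x (hx : 2 ≤ x) => ?_⟩
  have hlog := half_lt_log hx
  have hsqrt : 1 ≤ √x := one_le_sqrt.2 (by linarith)
  have hone : 1 ≤ 2 * (√x * log x) := by nlinarith
  calc ‖c‖ ≤ ‖c‖ * (2 * (√x * log x)) := le_mul_of_one_le_right (norm_nonneg c) hone
    _ = 2 * ‖c‖ * ‖√x * log x‖ := by
      rw [norm_of_nonneg (by positivity : 0 ≤ √x * log x)]
      ring

lemma isBigO_sqrt_mul_log_pow_succ (n : ℕ) :
    (fun x => √x * log x ^ n) =O[𝓟 (Ici 2)] fun x => √x * log x ^ (n + 1) := by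
  refine isBigO_principal.2 ⟨2, fun x (hx : 2 ≤ x) => ?_⟩
  have hlog := half_lt_log hx
  have hpow : 0 ≤ √x * log x ^ n := by positivity
  rw [norm_of_nonneg hpow, norm_of_nonneg (by positivity), pow_succ]
  nlinarith

lemma isBigO_psi_sub_self_iff_theta :
    ((fun x => Chebyshev.psi x - x) =O[𝓟 (Ici 2)] fun x => √x * log x ^ 2) ↔
      (fun x => Chebyshev.theta x - x) =O[𝓟 (Ici 2)] fun x => √x * log x ^ 2 := by
  have hdiff : (fun x => Chebyshev.psi x - Chebyshev.theta x) =O[𝓟 (Ici 2)]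
      fun x => √x * log x ^ 2 := by
    refine IsBigO.trans (isBigO_principal.2 ⟨2, fun x (hx : 2 ≤ x) => ?_⟩)
      (isBigO_sqrt_mul_log_pow_succ 1)
    have hlog := half_lt_log hx
    rw [pow_one, norm_eq_abs, norm_of_nonneg (by positivity), ← mul_assoc]
    exact Chebyshev.abs_psi_sub_theta_le_sqrt_mul_log (by linarith)
  refine ⟨fun h => (h.sub hdiff).congr_left fun x => ?_,
    fun h => (hdiff.add h).congr_left fun x => ?_⟩ <;> ring

lemma isBigO_primePi_sub_Li_of_theta
    (h : (fun x => Chebyshev.theta x - x) =O[𝓟 (Ici 2)] fun x => √x * log x ^ 2) :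
    (fun x => primePi x - Li x) =O[𝓟 (Ici 2)] fun x => √x * log x := by
  have hmain : (fun x => (Chebyshev.theta x - x) / log x) =O[𝓟 (Ici 2)]
      fun x => √x * log x := by
    refine (h.mul (isBigO_refl (fun x : ℝ => (log x)⁻¹) _)).congr' .rfl ?_
    filter_upwards [mem_principal_self _] with x hx
    have hlog := half_lt_log hx
    field_simp
  have hintegral : (fun x => ∫ t in (2:ℝ)..x, (Chebyshev.theta t - t) / (t * log t ^ 2))
      =O[𝓟 (Ici 2)] fun x => √x * log x := by
    have hsqrt : (fun x => √x * 1) =O[𝓟 (Ici 2)] fun x => √x * log x := by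
      simpa using isBigO_sqrt_mul_log_pow_succ 0
    refine (isBigO_integral_of_isBigO_div_sqrt monotoneOn_const zero_le_one ?_).trans hsqrt
    refine (h.mul (isBigO_refl (fun x : ℝ => (x * log x ^ 2)⁻¹) _)).congr' .rfl ?_
    filter_upwards [mem_principal_self _] with x (hx : 2 ≤ x)
    have hlog := half_lt_log hx
    have : 0 < x := by linarith
    rw [← div_eq_mul_inv, mul_div_mul_right _ _ (by positivity), sqrt_div_self', one_div]
  refine ((hmain.add hintegral).add (isBigO_const_sqrt_mul_log (2 / log 2))).congr' ?_ .rfl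
  filter_upwards [mem_principal_self _] with x hx using (primePi_sub_Li_eq hx).symm

lemma isBigO_theta_sub_self_of_primePi
    (h : (fun x => primePi x - Li x) =O[𝓟 (Ici 2)] fun x => √x * log x) :
    (fun x => Chebyshev.theta x - x) =O[𝓟 (Ici 2)] fun x => √x * log x ^ 2 := by
  have hstep : (fun x => √x * log x) =O[𝓟 (Ici 2)] fun x => √x * log x ^ 2 := by
    simpa using isBigO_sqrt_mul_log_pow_succ 1
  have hmain : (fun x => (primePi x - Li x) * log x) =O[𝓟 (Ici 2)] fun x => √x * log x ^ 2 :=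
    (h.mul (isBigO_refl log _)).congr_right fun x => by ring
  have hintegral : (fun x => ∫ t in (2:ℝ)..x, (primePi t - Li t) / t) =O[𝓟 (Ici 2)]
      fun x => √x * log x ^ 2 := by
    refine (isBigO_integral_of_isBigO_div_sqrt (g := log) ?_ (log_nonneg one_le_two) ?_).trans
      hstep
    · exact strictMonoOn_log.monotoneOn.mono fun x (hx : 2 ≤ x) => two_pos.trans_le hx
    · refine (h.mul (isBigO_refl (fun x : ℝ => x⁻¹) _)).congr_right fun x => ?_
      rw [mul_right_comm, ← div_eq_mul_inv, sqrt_div_self', one_div, mul_comm, div_eq_mul_inv]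
  refine ((hmain.sub hintegral).sub ((isBigO_const_sqrt_mul_log 2).trans hstep)).congr' ?_ .rfl
  filter_upwards [mem_principal_self _] with x hx using (theta_sub_self_eq hx).symm

lemma isBigO_psi_sub_self_iff_primePi :
    ((fun x => Chebyshev.psi x - x) =O[𝓟 (Ici 2)] fun x => √x * log x ^ 2) ↔
      (fun x => primePi x - Li x) =O[𝓟 (Ici 2)] fun x => √x * log x :=
  isBigO_psi_sub_self_iff_theta.trans
    ⟨isBigO_primePi_sub_Li_of_theta, isBigO_theta_sub_self_of_primePi⟩

end PartialSummation

/-! ### Mellin transforms over `(1, ∞)` and the entire function `(s - 1) ζ(s)` -/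

section MellinTransform

open Complex Set MeasureTheory Filter Topology

/-- The Mellin transform `∫₁^∞ e(t) t^(-s-1) dt`: the shape in which partial summation presents a
Dirichlet series whose coefficients have summatory function `e`. -/
noncomputable def tailMellin (e : ℝ → ℂ) (s : ℂ) : ℂ :=
  ∫ t in Ioi (1:ℝ), e t * (t:ℂ) ^ (-(s + 1))

lemma tailMellin_eq_mellin (e : ℝ → ℂ) (s : ℂ) :
    tailMellin e s = mellin ((Ioi (1:ℝ)).indicator e) (-s) := by
  rw [tailMellin, mellin, ← integral_indicator measurableSet_Ioi,
    ← integral_indicator measurableSet_Ioi]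
  congr 1 with t
  by_cases ht : 1 < t
  · have ht0 : 0 < t := by linarith
    simp only [indicator, mem_Ioi, ht, ht0, if_true, smul_eq_mul]
    rw [mul_comm, neg_add']
  · simp [indicator, ht]

section PowerBound

variable {e : ℝ → ℂ} {C a : ℝ}

lemma locallyIntegrableOn_indicator_Ioi_one
    (he : AEStronglyMeasurable e (volume.restrict (Ioi 1))) (hb : ∀ t > 1, ‖e t‖ ≤ C * t ^ a) :
    LocallyIntegrableOn ((Ioi (1:ℝ)).indicator e) (Ioi 0) := by
  have hpow : LocallyIntegrableOn (fun t : ℝ => C * t ^ a) (Ioi 0) := by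
    refine ContinuousOn.locallyIntegrableOn (continuousOn_const.mul ?_) measurableSet_Ioi
    exact continuousOn_id.rpow_const fun x hx => Or.inl (ne_of_gt hx)
  refine hpow.mono ((aestronglyMeasurable_indicator_iff measurableSet_Ioi).2 he)
    (Eventually.of_forall fun t => ?_)
  by_cases ht : 1 < t
  · simpa only [indicator, mem_Ioi, ht, if_true] using (hb t ht).trans (Real.le_norm_self _)
  · simp only [indicator, mem_Ioi, ht, if_false, norm_zero]
    positivity

lemma differentiableAt_tailMellin (he : AEStronglyMeasurable e (volume.restrict (Ioi 1)))
    (hb : ∀ t > 1, ‖e t‖ ≤ C * t ^ a) {s : ℂ} (hs : a < s.re) :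
    DifferentiableAt ℂ (tailMellin e) s := by
  have hmellin : DifferentiableAt ℂ (mellin ((Ioi (1:ℝ)).indicator e)) (-s) := by
    refine mellin_differentiableAt_of_isBigO_rpow (a := -a) (b := -s.re - 1)
      (locallyIntegrableOn_indicator_Ioi_one he hb) ?_ (by simpa using hs) ?_ (by simp)
    · refine Asymptotics.IsBigO.of_bound C ?_
      filter_upwards [eventually_gt_atTop 1] with t ht
      simp only [indicator, mem_Ioi, ht, if_true, neg_neg]
      rw [Real.norm_of_nonneg (by positivity)]
      exact hb t ht
    · have hzero : (Ioi (1:ℝ)).indicator e =ᶠ[𝓝[>] 0] 0 := by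
        filter_upwards [nhdsWithin_le_nhds (Iio_mem_nhds zero_lt_one)] with t (ht : t < 1)
        exact indicator_of_notMem (not_lt.2 ht.le) e
      exact hzero.trans_isBigO (Asymptotics.isBigO_zero _ _)
  rw [funext (tailMellin_eq_mellin e)]
  exact hmellin.comp s (differentiable_neg s)

lemma ae_norm_mul_cpow_le (hb : ∀ t > 1, ‖e t‖ ≤ C * t ^ a) (s : ℂ) :
    ∀ᵐ t ∂volume.restrict (Ioi (1:ℝ)), ‖e t * (t:ℂ) ^ (-(s + 1))‖ ≤ C * t ^ (a - s.re - 1) := by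
  filter_upwards [ae_restrict_mem measurableSet_Ioi] with t (ht : 1 < t)
  have ht0 : 0 < t := by linarith
  calc ‖e t * (t:ℂ) ^ (-(s + 1))‖ ≤ C * t ^ a * t ^ (-(s + 1)).re := by
        rw [norm_mul, norm_cpow_eq_rpow_re_of_pos ht0]
        gcongr
        exact hb t ht
    _ = C * t ^ (a - s.re - 1) := by
        rw [mul_assoc, ← Real.rpow_add ht0, neg_re, add_re, one_re]
        congr 2
        ring

lemma integrableOn_mul_cpow (he : AEStronglyMeasurable e (volume.restrict (Ioi 1)))
    (hb : ∀ t > 1, ‖e t‖ ≤ C * t ^ a) {s : ℂ} (hs : a < s.re) :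
    IntegrableOn (fun t : ℝ => e t * (t:ℂ) ^ (-(s + 1))) (Ioi 1) :=
  ((integrableOn_Ioi_rpow_of_lt (by linarith) zero_lt_one).const_mul C).mono'
    (he.mul (by fun_prop : Measurable fun t : ℝ => (t:ℂ) ^ (-(s + 1))).aestronglyMeasurable)
    (ae_norm_mul_cpow_le hb s)

lemma norm_tailMellin_le (hb : ∀ t > 1, ‖e t‖ ≤ C * t ^ a) {s : ℂ} (hs : a < s.re) :
    ‖tailMellin e s‖ ≤ C / (s.re - a) := by
  have hexp : a - s.re - 1 < -1 := by linarith
  refine (norm_integral_le_of_norm_le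
    ((integrableOn_Ioi_rpow_of_lt hexp zero_lt_one).const_mul C)
    (ae_norm_mul_cpow_le hb s)).trans_eq ?_
  rw [integral_const_mul, integral_Ioi_rpow_of_lt hexp zero_lt_one, Real.one_rpow,
    sub_add_cancel, mul_div_assoc', ← neg_div_neg_eq, neg_sub, mul_neg, neg_neg, mul_one]

end PowerBound

lemma integrableOn_ofReal_mul_cpow {s : ℂ} (hs : 1 < s.re) :
    IntegrableOn (fun t : ℝ => (t:ℂ) * (t:ℂ) ^ (-(s + 1))) (Ioi 1) :=
  integrableOn_mul_cpow (C := 1) (a := 1) (by fun_prop)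
    (fun t ht => by simp [abs_of_pos (zero_lt_one.trans ht)]) hs

lemma tailMellin_ofReal {s : ℂ} (hs : 1 < s.re) : tailMellin (fun t => (t:ℂ)) s = 1 / (s - 1) := by
  have hpow : EqOn (fun t : ℝ => (t:ℂ) * (t:ℂ) ^ (-(s + 1))) (fun t : ℝ => (t:ℂ) ^ (-s))
      (Ioi 1) := fun t (ht : 1 < t) => by
    have ht0 : (t:ℂ) ≠ 0 := ofReal_ne_zero.2 (by linarith)
    change (t:ℂ) * (t:ℂ) ^ (-(s + 1)) = (t:ℂ) ^ (-s)
    rw [neg_add', cpow_sub _ _ ht0, cpow_one, mul_div_cancel₀ _ ht0]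
  rw [tailMellin, setIntegral_congr_fun measurableSet_Ioi hpow,
    integral_Ioi_cpow_of_lt (by simpa using hs) zero_lt_one, ofReal_one, one_cpow,
    ← neg_div_neg_eq, neg_neg, neg_add, neg_neg, sub_eq_add_neg]

lemma isOpen_re_gt (a : ℝ) : IsOpen {s : ℂ | a < s.re} :=
  isOpen_lt continuous_const continuous_re

lemma eqOn_re_gt_of_eqOn_re_gt {a b : ℝ} {F G : ℂ → ℂ}
    (hF : DifferentiableOn ℂ F {s | a < s.re}) (hG : DifferentiableOn ℂ G {s | a < s.re})
    (h : EqOn F G {s | b < s.re}) : EqOn F G {s | a < s.re} := by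
  have hmem : ((max a b + 1 : ℝ) : ℂ) ∈ {s : ℂ | a < s.re} := by
    simp only [mem_ofPred_eq, ofReal_re]
    linarith [le_max_left a b]
  have hmem' : ((max a b + 1 : ℝ) : ℂ) ∈ {s : ℂ | b < s.re} := by
    simp only [mem_ofPred_eq, ofReal_re]
    linarith [le_max_right a b]
  exact (hF.analyticOnNhd (isOpen_re_gt a)).eqOn_of_preconnected_of_eventuallyEq
    (hG.analyticOnNhd (isOpen_re_gt a)) (convex_halfSpace_re_gt a).isPreconnected hmem
    (h.eventuallyEq_of_mem ((isOpen_re_gt b).mem_nhds hmem'))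

/-- The entire function `(s - 1) ζ(s)`, with its limit `1` at the pole of `ζ`. -/
noncomputable def regularizedZeta : ℂ → ℂ :=
  Function.update (fun s => (s - 1) * riemannZeta s) 1 1

lemma regularizedZeta_one : regularizedZeta 1 = 1 := Function.update_self ..

lemma regularizedZeta_of_ne {s : ℂ} (hs : s ≠ 1) :
    regularizedZeta s = (s - 1) * riemannZeta s := Function.update_of_ne hs ..

lemma differentiable_regularizedZeta : Differentiable ℂ regularizedZeta := by
  rw [← differentiableOn_univ,
    ← differentiableOn_compl_singleton_and_continuousAt_iff (c := 1) univ_mem]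
  refine ⟨fun s hs => ?_, continuousAt_update_same.2 riemannZeta_residue_one⟩
  have hs1 : s ≠ 1 := hs.2
  refine (((differentiableAt_id.sub_const 1).mul (differentiableAt_riemannZeta hs1))
    |>.congr_of_eventuallyEq ?_).differentiableWithinAt
  filter_upwards [eventually_ne_nhds hs1] with z hz using regularizedZeta_of_ne hz

lemma ne_one_of_one_lt_re {s : ℂ} (hs : 1 < s.re) : s ≠ 1 := by
  rintro rfl
  simp at hs

lemma regularizedZeta_ne_zero_of_one_lt_re {s : ℂ} (hs : 1 < s.re) : regularizedZeta s ≠ 0 := by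
  have hs1 := ne_one_of_one_lt_re hs
  rw [regularizedZeta_of_ne hs1]
  exact mul_ne_zero (sub_ne_zero.2 hs1) (riemannZeta_ne_zero_of_one_le_re hs.le)

lemma logDeriv_regularizedZeta {s : ℂ} (hs : 1 < s.re) :
    logDeriv regularizedZeta s =
      1 / (s - 1) - LSeries (fun n => (ArithmeticFunction.vonMangoldt n : ℂ)) s := by
  have hs1 := ne_one_of_one_lt_re hs
  have hs1' : s - 1 ≠ 0 := sub_ne_zero.2 hs1
  have heq : regularizedZeta =ᶠ[𝓝 s] fun z => (z - 1) * riemannZeta z := by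
    filter_upwards [eventually_ne_nhds hs1] with z hz using regularizedZeta_of_ne hz
  rw [logDeriv_apply, heq.deriv_eq, heq.eq_of_nhds, ← logDeriv_apply,
    logDeriv_mul s hs1' (riemannZeta_ne_zero_of_one_le_re hs.le) (by fun_prop)
      (differentiableAt_riemannZeta hs1),
    ArithmeticFunction.LSeries_vonMangoldt_eq_deriv_riemannZeta_div hs, logDeriv_apply,
    logDeriv_apply, deriv_sub_const, deriv_id'']
  ring

lemma aestronglyMeasurable_fract :
    AEStronglyMeasurable (fun t : ℝ => ((t - ⌊t⌋₊ : ℝ) : ℂ)) (volume.restrict (Ioi 1)) := by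
  have : Measurable fun t : ℝ => (⌊t⌋₊ : ℝ) := by fun_prop
  fun_prop

lemma norm_fract_le {t : ℝ} (ht : 1 < t) : ‖((t - ⌊t⌋₊ : ℝ) : ℂ)‖ ≤ 1 * t ^ (0:ℝ) := by
  have hle := Nat.floor_le (by linarith : 0 ≤ t)
  have hlt := Nat.lt_floor_add_one t
  rw [norm_real, Real.norm_eq_abs, abs_le, Real.rpow_zero]
  constructor <;> linarith

lemma regularizedZeta_eq_of_one_lt_re {s : ℂ} (hs : 1 < s.re) :
    regularizedZeta s = s - s * (s - 1) * tailMellin (fun t => ((t - ⌊t⌋₊ : ℝ) : ℂ)) s := by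
  have hs1 := ne_one_of_one_lt_re hs
  have hs1' : s - 1 ≠ 0 := sub_ne_zero.2 hs1
  have hfloor : ∫ t in Ioi (1:ℝ),
      (∑ k ∈ Finset.Icc 1 ⌊t⌋₊, (1 : ℕ → ℂ) k) * (t:ℂ) ^ (-(s + 1)) =
      1 / (s - 1) - tailMellin (fun t => ((t - ⌊t⌋₊ : ℝ) : ℂ)) s := by
    rw [← tailMellin_ofReal hs, tailMellin, tailMellin, ← integral_sub
      (integrableOn_ofReal_mul_cpow hs)
      (integrableOn_mul_cpow aestronglyMeasurable_fract (fun _ => norm_fract_le) (by linarith))]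
    congr 1 with t
    simp only [Pi.one_apply, Finset.sum_const, Nat.card_Icc, add_tsub_cancel_right, nsmul_eq_mul,
      mul_one, ofReal_sub, ofReal_natCast]
    ring
  have hsum : (fun n : ℕ => ∑ k ∈ Finset.Icc 1 n, ‖(1 : ℕ → ℂ) k‖) =O[atTop]
      fun n => (n:ℝ) ^ (1:ℝ) := by
    simpa using Asymptotics.isBigO_refl _ _
  rw [regularizedZeta_of_ne hs1, ← LSeries_one_eq_riemannZeta hs,
    LSeries_eq_mul_integral' 1 zero_le_one hs hsum, hfloor]
  field_simp

lemma regularizedZeta_eq_of_re_pos {s : ℂ} (hs : 0 < s.re) :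
    regularizedZeta s = s - s * (s - 1) * tailMellin (fun t => ((t - ⌊t⌋₊ : ℝ) : ℂ)) s := by
  refine eqOn_re_gt_of_eqOn_re_gt (b := 1) (F := regularizedZeta)
    (G := fun z => z - z * (z - 1) * tailMellin (fun t => ((t - ⌊t⌋₊ : ℝ) : ℂ)) z)
    differentiable_regularizedZeta.differentiableOn (fun z hz => ?_)
    (fun z hz => regularizedZeta_eq_of_one_lt_re hz) hs
  have hdiff := differentiableAt_tailMellin aestronglyMeasurable_fract (fun _ => norm_fract_le) hz
  exact DifferentiableAt.differentiableWithinAt (by fun_prop)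

lemma norm_regularizedZeta_le {s : ℂ} (hs : 1 / 10 ≤ s.re) :
    ‖regularizedZeta s‖ ≤ 11 * (‖s‖ + 1) ^ 2 := by
  have hs0 : 0 < s.re := by linarith
  have htail : ‖tailMellin (fun t => ((t - ⌊t⌋₊ : ℝ) : ℂ)) s‖ ≤ 10 := by
    refine (norm_tailMellin_le (fun _ => norm_fract_le) hs0).trans ?_
    rw [div_le_iff₀ (by linarith)]
    linarith
  have hsub : ‖s - 1‖ ≤ ‖s‖ + 1 := by simpa using norm_sub_le s 1
  rw [regularizedZeta_eq_of_re_pos hs0]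
  calc ‖s - s * (s - 1) * tailMellin (fun t => ((t - ⌊t⌋₊ : ℝ) : ℂ)) s‖
      ≤ ‖s‖ + ‖s‖ * ‖s - 1‖ * ‖tailMellin (fun t => ((t - ⌊t⌋₊ : ℝ) : ℂ)) s‖ := by
        rw [← norm_mul, ← norm_mul]
        exact norm_sub_le _ _
    _ ≤ ‖s‖ + ‖s‖ * (‖s‖ + 1) * 10 := by gcongr
    _ ≤ 11 * (‖s‖ + 1) ^ 2 := by nlinarith [norm_nonneg s]

lemma aestronglyMeasurable_psi_sub_self :
    AEStronglyMeasurable (fun t : ℝ => ((Chebyshev.psi t - t : ℝ) : ℂ))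
      (volume.restrict (Ioi 1)) := by
  have hpsi : Measurable Chebyshev.psi := Chebyshev.psi_mono.measurable
  fun_prop

lemma abs_psi_sub_self_le {t : ℝ} (ht : 0 ≤ t) : |Chebyshev.psi t - t| ≤ 8 * t := by
  have hle := Chebyshev.psi_le_const_mul_self ht
  have hnonneg := Chebyshev.psi_nonneg t
  have hlog : Real.log 4 ≤ 3 := (Real.log_le_sub_one_of_pos four_pos).trans (by norm_num)
  rw [abs_le]
  constructor <;> nlinarith

lemma LSeries_vonMangoldt_eq {s : ℂ} (hs : 1 < s.re) :
    LSeries (fun n => (ArithmeticFunction.vonMangoldt n : ℂ)) s =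
      s / (s - 1) + s * tailMellin (fun t => ((Chebyshev.psi t - t : ℝ) : ℂ)) s := by
  have hs1' : s - 1 ≠ 0 := sub_ne_zero.2 (ne_one_of_one_lt_re hs)
  have hpsi (t : ℝ) : ∑ k ∈ Finset.Icc 1 ⌊t⌋₊, ArithmeticFunction.vonMangoldt k =
      Chebyshev.psi t := rfl
  have hsum : (fun n : ℕ => ∑ k ∈ Finset.Icc 1 n, ArithmeticFunction.vonMangoldt k) =O[atTop]
      fun n => (n:ℝ) ^ (1:ℝ) := by
    refine Asymptotics.IsBigO.of_bound (Real.log 4 + 4) (Eventually.of_forall fun n => ?_)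
    have hn := hpsi n
    rw [Nat.floor_natCast] at hn
    rw [hn, Real.rpow_one, Real.norm_of_nonneg (Chebyshev.psi_nonneg _),
      Real.norm_of_nonneg n.cast_nonneg]
    exact Chebyshev.psi_le_const_mul_self n.cast_nonneg
  have hbound (t : ℝ) (ht : 1 < t) :
      ‖((Chebyshev.psi t - t : ℝ) : ℂ)‖ ≤ 8 * t ^ (1:ℝ) := by
    rw [norm_real, Real.rpow_one]
    exact abs_psi_sub_self_le (by linarith)
  have hintegral : ∫ t in Ioi (1:ℝ), (∑ k ∈ Finset.Icc 1 ⌊t⌋₊,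
      (ArithmeticFunction.vonMangoldt k : ℂ)) * (t:ℂ) ^ (-(s + 1)) =
      1 / (s - 1) + tailMellin (fun t => ((Chebyshev.psi t - t : ℝ) : ℂ)) s := by
    rw [← tailMellin_ofReal hs, tailMellin, tailMellin, ← integral_add
      (integrableOn_ofReal_mul_cpow hs)
      (integrableOn_mul_cpow aestronglyMeasurable_psi_sub_self hbound hs)]
    congr 1 with t
    rw [← hpsi t]
    push_cast
    ring
  rw [LSeries_eq_mul_integral_of_nonneg _ zero_le_one hs hsum
    fun n => ArithmeticFunction.vonMangoldt_nonneg, hintegral]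
  field_simp

end MellinTransform

/-! ### From the error bound for `ψ` to the Riemann hypothesis -/

section ZeroFree

open Complex Set MeasureTheory Filter Topology Asymptotics

lemma abs_psi_sub_self_le_rpow
    (h : (fun x => Chebyshev.psi x - x) =O[𝓟 (Ici 2)] fun x => √x * Real.log x ^ 2) {a : ℝ}
    (ha : 1 / 2 < a) : ∃ C, ∀ t > 1, |Chebyshev.psi t - t| ≤ C * t ^ a := by
  obtain ⟨C, hC0, hC⟩ := h.exists_nonneg
  rw [isBigOWith_principal] at hC
  set ε := (a - 1 / 2) / 2 with hε
  have hε0 : 0 < ε := by linarith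
  refine ⟨C / ε ^ 2 + 2, fun t ht => ?_⟩
  have ht0 : 0 < t := by linarith
  have hpow : 1 ≤ t ^ a := Real.one_le_rpow ht.le (by linarith)
  have hsplit : t ^ a = √t * (t ^ ε) ^ 2 := by
    rw [Real.sqrt_eq_rpow, ← Real.rpow_natCast, ← Real.rpow_mul ht0.le, ← Real.rpow_add ht0, hε]
    congr 1
    push_cast
    ring
  rcases le_or_gt 2 t with ht2 | ht2
  · have hlog := Real.log_le_rpow_div ht0.le hε0
    have hlog0 : 0 ≤ Real.log t := Real.log_nonneg ht.le
    calc |Chebyshev.psi t - t| ≤ C * (√t * Real.log t ^ 2) := by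
          simpa only [Real.norm_eq_abs, abs_of_nonneg (by positivity : 0 ≤ √t * Real.log t ^ 2)]
            using hC t ht2
      _ ≤ C * (√t * (t ^ ε / ε) ^ 2) := by gcongr
      _ = C / ε ^ 2 * t ^ a := by rw [hsplit]; field_simp
      _ ≤ (C / ε ^ 2 + 2) * t ^ a := by gcongr; linarith
  · have hC' : 0 ≤ C / ε ^ 2 := by positivity
    rw [Chebyshev.psi_eq_zero_of_lt_two ht2, zero_sub, abs_neg, abs_of_pos ht0]
    nlinarith

-- At a zero of finite order, `f'` vanishes to strictly smaller order than `k * f`.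
lemma ne_zero_of_deriv_eventuallyEq_mul {f k : ℂ → ℂ} {z : ℂ} (hf : AnalyticAt ℂ f z)
    (hk : AnalyticAt ℂ k z) (hderiv : deriv f =ᶠ[𝓝 z] k * f) (hne : ¬ f =ᶠ[𝓝 z] 0) :
    f z ≠ 0 := by
  intro hz
  have horder := hf.analyticOrderAt_deriv_add_one
  simp only [hz, sub_zero, analyticOrderAt_congr hderiv, analyticOrderAt_mul hk hf] at horder
  have htop : analyticOrderAt f z ≠ ⊤ := mt analyticOrderAt_eq_top.1 hne
  have hle : analyticOrderAt f z + 1 ≤ analyticOrderAt f z :=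
    calc analyticOrderAt f z + 1 ≤ analyticOrderAt k z + analyticOrderAt f z + 1 := by
          gcongr
          exact le_add_self
      _ = analyticOrderAt f z := horder
  lift analyticOrderAt f z to ℕ using htop with m
  norm_cast at hle
  omega

lemma not_regularizedZeta_eventuallyEq_zero (z : ℂ) : ¬ regularizedZeta =ᶠ[𝓝 z] 0 := fun h => by
  have hanalytic : AnalyticOnNhd ℂ regularizedZeta univ :=
    fun w _ => differentiable_regularizedZeta.analyticAt w
  have hzero := hanalytic.eqOn_of_preconnected_of_eventuallyEq (g := 0)
    (fun _ _ => analyticAt_const) isPreconnected_univ (mem_univ z) h (mem_univ 1)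
  rw [regularizedZeta_one] at hzero
  exact one_ne_zero hzero

lemma regularizedZeta_ne_zero_of_psi_bound {C a : ℝ}
    (hC : ∀ t > 1, |Chebyshev.psi t - t| ≤ C * t ^ a) {ρ : ℂ} (hρ : a < ρ.re) :
    regularizedZeta ρ ≠ 0 := by
  set k : ℂ → ℂ := fun s => -(1 + s * tailMellin (fun t => ((Chebyshev.psi t - t : ℝ) : ℂ)) s)
    with hk
  have hk_diff : DifferentiableOn ℂ k {s | a < s.re} := fun s hs => by
    have htail := differentiableAt_tailMellin aestronglyMeasurable_psi_sub_self
      (fun t ht => by simpa only [norm_real, Real.norm_eq_abs] using hC t ht) hs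
    exact DifferentiableAt.differentiableWithinAt (by fun_prop)
  have hderiv_diff : Differentiable ℂ (deriv regularizedZeta) :=
    (differentiable_regularizedZeta.contDiff (n := 2)).differentiable_deriv_two
  have hode : EqOn (deriv regularizedZeta) (k * regularizedZeta) {s | a < s.re} := by
    refine eqOn_re_gt_of_eqOn_re_gt (b := 1) hderiv_diff.differentiableOn
      (hk_diff.mul differentiable_regularizedZeta.differentiableOn) fun s (hs : 1 < s.re) => ?_
    have hs1 : s - 1 ≠ 0 := sub_ne_zero.2 (ne_one_of_one_lt_re hs)
    have hlog := logDeriv_regularizedZeta hs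
    rw [LSeries_vonMangoldt_eq hs, logDeriv_apply,
      div_eq_iff (regularizedZeta_ne_zero_of_one_lt_re hs)] at hlog
    rw [hlog, Pi.mul_apply, hk]
    congr 1
    field_simp
    ring
  have hnhds := (isOpen_re_gt a).mem_nhds hρ
  exact ne_zero_of_deriv_eventuallyEq_mul (differentiable_regularizedZeta.analyticAt ρ)
    (hk_diff.analyticAt hnhds) (hode.eventuallyEq_of_mem hnhds)
    (not_regularizedZeta_eventuallyEq_zero ρ)

lemma riemannHypothesis_of_re_le_half
    (h : ∀ s : ℂ, riemannZeta s = 0 → s ≠ 1 → s.re ≤ 1 / 2) : RiemannHypothesis := by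
  intro s hs hnontrivial hs1
  have hs0 : s ≠ 0 := by
    rintro rfl
    norm_num [riemannZeta_zero] at hs
  have hGamma : Gammaℝ s ≠ 0 := by
    rw [Ne, Gammaℝ_eq_zero_iff]
    rintro ⟨_ | n, rfl⟩
    · simp at hs0
    · exact hnontrivial ⟨n, by push_cast; ring⟩
  have hcompleted : completedRiemannZeta s = 0 := by
    rw [riemannZeta_def_of_ne_zero hs0, div_eq_zero_iff] at hs
    exact hs.resolve_right hGamma
  have hreflect : riemannZeta (1 - s) = 0 := by
    rw [riemannZeta_def_of_ne_zero (sub_ne_zero.2 hs1.symm), completedRiemannZeta_one_sub,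
      hcompleted, zero_div]
  have hle := h (1 - s) hreflect (by simpa using hs0)
  rw [sub_re, one_re] at hle
  exact le_antisymm (h s hs hs1) (by linarith)

lemma riemannHypothesis_of_isBigO_psi_sub_self
    (h : (fun x => Chebyshev.psi x - x) =O[𝓟 (Ici 2)] fun x => √x * Real.log x ^ 2) :
    RiemannHypothesis := by
  refine riemannHypothesis_of_re_le_half fun s hs hs1 => ?_
  by_contra! hre
  obtain ⟨a, ha, has⟩ := exists_between hre
  obtain ⟨C, hC⟩ := abs_psi_sub_self_le_rpow h ha
  exact regularizedZeta_ne_zero_of_psi_bound hC has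
    (by rw [regularizedZeta_of_ne hs1, hs, mul_zero])

end ZeroFree

/-! ### Landau's local partial fraction expansion of a logarithmic derivative -/

section LandauLemma

open Complex Set Filter Topology Metric ComplexConjugate

lemma exists_log_of_ne_zero_on_ball {G : ℂ → ℂ} {R : ℝ} (hR : 0 < R)
    (hG : DifferentiableOn ℂ G (ball 0 R)) (hne : ∀ z ∈ ball 0 R, G z ≠ 0) :
    ∃ L : ℂ → ℂ, L 0 = 0 ∧ ∀ z ∈ ball 0 R, HasDerivAt L (logDeriv G z) z ∧
      G z = G 0 * exp (L z) := by
  have hlogDeriv : DifferentiableOn ℂ (logDeriv G) (ball 0 R) := (hG.deriv isOpen_ball).div hG hne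
  obtain ⟨L, hL0, hL⟩ := hlogDeriv.isExactOn_ball.with_val_at 0 0
  refine ⟨L, hL0, fun z hz => ⟨hL z hz, ?_⟩⟩
  have hderiv : ∀ w ∈ ball (0:ℂ) R,
      HasDerivWithinAt (fun w => G w * exp (-L w)) 0 (ball 0 R) w := fun w hw => by
    have hGw := (hG.differentiableAt (isOpen_ball.mem_nhds hw)).hasDerivAt
    have hprod := hGw.fun_mul (hL w hw).fun_neg.cexp
    have hcancel : deriv G w * exp (-L w) + G w * (exp (-L w) * -logDeriv G w) = 0 := by
      have := hne w hw
      rw [logDeriv_apply]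
      field_simp
      ring
    rw [hcancel] at hprod
    exact hprod.hasDerivWithinAt
  have hconst := (convex_ball (0:ℂ) R).norm_image_sub_le_of_norm_hasDerivWithin_le hderiv
    (fun _ _ => norm_zero.le) (mem_ball_self hR) hz
  simp only [zero_mul, norm_le_zero_iff, sub_eq_zero, hL0, neg_zero, exp_zero, mul_one] at hconst
  rw [← hconst, mul_assoc, ← exp_add, neg_add_cancel, exp_zero, mul_one]

lemma norm_logDeriv_le_of_norm_le_mul_exp {G : ℂ → ℂ} {R r B : ℝ} (hrR : r < R)
    (hB : 0 < B) (hG : DifferentiableOn ℂ G (ball 0 R)) (hne : ∀ z ∈ ball 0 R, G z ≠ 0)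
    (hbound : ∀ z ∈ ball 0 R, ‖G z‖ ≤ ‖G 0‖ * Real.exp B) {z : ℂ} (hz : ‖z‖ ≤ r) :
    ‖logDeriv G z‖ ≤ 4 * (R + r) / (R - r) ^ 2 * B := by
  have hr : 0 ≤ r := (norm_nonneg z).trans hz
  have hR : 0 < R := hr.trans_lt hrR
  obtain ⟨L, hL0, hL⟩ := exists_log_of_ne_zero_on_ball hR hG hne
  have hL_diff : DifferentiableOn ℂ L (ball 0 R) :=
    fun w hw => (hL w hw).1.differentiableAt.differentiableWithinAt
  have hL_re : MapsTo L (ball 0 R) {z | z.re ≤ B} := fun w hw => by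
    have hle := hbound w hw
    rw [(hL w hw).2, norm_mul, norm_exp] at hle
    exact Real.exp_le_exp.1
      (le_of_mul_le_mul_left hle (norm_pos_iff.2 (hne 0 (mem_ball_self hR))))
  set d := (R - r) / 2 with hd
  have hd0 : 0 < d := by linarith
  have hw_norm : ∀ w ∈ closedBall z d, ‖w‖ ≤ r + d := fun w hw => by
    have hdist : ‖w - z‖ ≤ d := by simpa [dist_eq_norm] using hw
    linarith [norm_le_norm_add_norm_sub' w z]
  have hw_mem : ∀ w ∈ closedBall z d, w ∈ ball (0:ℂ) R := fun w hw => by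
    rw [mem_ball_zero_iff]
    linarith [hw_norm w hw]
  have hcauchy : ‖deriv L z‖ ≤ (2 * B * (r + d) / (R - (r + d))) / d := by
    refine norm_deriv_le_of_forall_mem_sphere_norm_le hd0 ?_ fun w hw => ?_
    · refine DifferentiableOn.diffContOnCl ?_
      rw [closure_ball _ hd0.ne']
      exact hL_diff.mono hw_mem
    · have hw' := sphere_subset_closedBall hw
      have hsub : 0 < R - (r + d) := by linarith
      refine (borelCaratheodory_zero hB hL_diff hL_re hR (hw_mem w hw') hL0).trans ?_
      gcongr <;> exact hw_norm w hw'
  rw [(hL z (hw_mem z (mem_closedBall_self hd0.le))).1.deriv] at hcauchy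
  refine hcauchy.trans_eq ?_
  have hsub : R - r ≠ 0 := by linarith
  rw [hd, show R - (r + (R - r) / 2) = (R - r) / 2 by ring]
  field_simp
  ring

variable {ι : Type*} [Fintype ι] {R R₁ : ℝ} {ρ : ι → ℂ}

/-- The product `∏ᵢ (R² - ρ̄ᵢ z) / R`. On the circle `‖z‖ = R` it has the modulus of
`∏ᵢ (z - ρᵢ)`, but its zeros are the reflections of the `ρᵢ` in that circle. -/
noncomputable def reflectedProd (R : ℝ) (ρ : ι → ℂ) (z : ℂ) : ℂ :=
  ∏ i, (R ^ 2 - conj (ρ i) * z) / R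

lemma differentiable_reflectedProd : Differentiable ℂ (reflectedProd R ρ) := by
  unfold reflectedProd
  fun_prop

lemma norm_reflectedProd_of_norm_eq (hR : 0 < R) {z : ℂ} (hz : ‖z‖ = R) :
    ‖reflectedProd R ρ z‖ = ‖∏ i, (z - ρ i)‖ := by
  rw [reflectedProd, norm_prod, norm_prod]
  refine Finset.prod_congr rfl fun i _ => ?_
  have hfactor : (R:ℂ) ^ 2 - conj (ρ i) * z = z * conj (z - ρ i) := by
    rw [map_sub, mul_sub, mul_conj, normSq_eq_norm_sq, hz]
    push_cast
    ring
  rw [hfactor, norm_div, norm_mul, hz, norm_conj, norm_real,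
    Real.norm_of_nonneg hR.le, mul_div_cancel_left₀ _ hR.ne']

lemma norm_reflectedProd_zero (hR : 0 < R) : ‖reflectedProd R ρ 0‖ = R ^ Fintype.card ι := by
  have hfactor (i : ι) : ((R:ℂ) ^ 2 - conj (ρ i) * 0) / R = R := by
    have : (R:ℂ) ≠ 0 := ofReal_ne_zero.2 hR.ne'
    field_simp
    ring
  rw [reflectedProd, Finset.prod_congr rfl fun i _ => hfactor i, Finset.prod_const,
    Finset.card_univ, norm_pow, norm_real, Real.norm_of_nonneg hR.le]

lemma sq_sub_sq_le_norm_reflected (hR₁ : 0 ≤ R₁) {w z : ℂ} (hw : ‖w‖ ≤ R₁) (hz : ‖z‖ ≤ R₁) :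
    R ^ 2 - R₁ ^ 2 ≤ ‖(R:ℂ) ^ 2 - conj w * z‖ := by
  have hprod : ‖conj w * z‖ ≤ R₁ ^ 2 := by
    rw [norm_mul, norm_conj, sq]
    gcongr
  have hsq : ‖(R:ℂ) ^ 2‖ = R ^ 2 := by simp
  linarith [norm_sub_norm_le ((R:ℂ) ^ 2) (conj w * z)]

lemma reflected_factor_ne_zero (hR₁ : 0 ≤ R₁) (hR : R₁ < R) {w z : ℂ} (hw : ‖w‖ ≤ R₁)
    (hz : ‖z‖ ≤ R₁) : (R:ℂ) ^ 2 - conj w * z ≠ 0 :=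
  norm_pos_iff.1 <| lt_of_lt_of_le (by nlinarith) (sq_sub_sq_le_norm_reflected hR₁ hw hz)

lemma reflectedProd_ne_zero (hR₁ : 0 ≤ R₁) (hR : R₁ < R) (hρ : ∀ i, ‖ρ i‖ ≤ R₁) {z : ℂ}
    (hz : ‖z‖ ≤ R₁) : reflectedProd R ρ z ≠ 0 :=
  Finset.prod_ne_zero_iff.2 fun i _ => div_ne_zero (reflected_factor_ne_zero hR₁ hR (hρ i) hz)
    (ofReal_ne_zero.2 (hR₁.trans_lt hR).ne')

lemma norm_logDeriv_reflectedProd_le (hR₁ : 0 ≤ R₁) (hR : R₁ < R) (hρ : ∀ i, ‖ρ i‖ ≤ R₁) {z : ℂ}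
    (hz : ‖z‖ ≤ R₁) :
    ‖logDeriv (reflectedProd R ρ) z‖ ≤ Fintype.card ι * (R₁ / (R ^ 2 - R₁ ^ 2)) := by
  have hRC : (R:ℂ) ≠ 0 := ofReal_ne_zero.2 (hR₁.trans_lt hR).ne'
  have hfactor_ne (i : ι) := reflected_factor_ne_zero hR₁ hR (hρ i) hz
  have hfactor (i : ι) : logDeriv (fun w => ((R:ℂ) ^ 2 - conj (ρ i) * w) / R) z =
      -conj (ρ i) / (R ^ 2 - conj (ρ i) * z) := by
    have hderiv : HasDerivAt (fun w : ℂ => ((R:ℂ) ^ 2 - conj (ρ i) * w) / R)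
        (-conj (ρ i) / R) z := by
      simpa using (((hasDerivAt_id z).const_mul (conj (ρ i))).const_sub ((R:ℂ) ^ 2)).div_const
        (R:ℂ)
    have := hfactor_ne i
    rw [logDeriv_apply, hderiv.deriv]
    field_simp
  have hsum : logDeriv (reflectedProd R ρ) z =
      ∑ i, -conj (ρ i) / (R ^ 2 - conj (ρ i) * z) := by
    unfold reflectedProd
    rw [logDeriv_prod (f := fun (i : ι) (w : ℂ) => ((R:ℂ) ^ 2 - conj (ρ i) * w) / R)
      (fun i _ => div_ne_zero (hfactor_ne i) hRC) (fun i _ => by fun_prop)]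
    exact Finset.sum_congr rfl fun i _ => hfactor i
  have hterm (i : ι) : ‖-conj (ρ i) / (R ^ 2 - conj (ρ i) * z)‖ ≤ R₁ / (R ^ 2 - R₁ ^ 2) := by
    rw [norm_div, norm_neg, norm_conj]
    exact div_le_div₀ hR₁ (hρ i) (by nlinarith) (sq_sub_sq_le_norm_reflected hR₁ (hρ i) hz)
  rw [hsum]
  refine (norm_sum_le _ _).trans ((Finset.sum_le_card_nsmul _ _ _ fun i _ => hterm i).trans_eq ?_)
  rw [Finset.card_univ, nsmul_eq_mul]

section Factorization

variable {f g : ℂ → ℂ} {M : ℝ}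

lemma norm_mul_reflectedProd_le (hR : 0 < R) (hg : Differentiable ℂ g)
    (hfac : ∀ z, f z = (∏ i, (z - ρ i)) * g z) (hM : ∀ z, ‖z‖ = R → ‖f z‖ ≤ M) {z : ℂ}
    (hz : ‖z‖ ≤ R) : ‖g z * reflectedProd R ρ z‖ ≤ M := by
  refine norm_le_of_forall_mem_frontier_norm_le (U := ball 0 R) isBounded_ball
    (hg.mul differentiable_reflectedProd).diffContOnCl (fun w hw => ?_)
    (by rw [closure_ball _ hR.ne']; simpa using hz)
  rw [frontier_ball _ hR.ne', mem_sphere_zero_iff_norm] at hw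
  calc ‖g w * reflectedProd R ρ w‖ = ‖f w‖ := by
        rw [norm_mul, norm_reflectedProd_of_norm_eq hR hw, ← norm_mul, mul_comm, ← hfac]
    _ ≤ M := hM w hw

lemma norm_apply_zero_mul_pow_le (hR₁ : 0 < R₁) (hR : 0 < R) (hρ : ∀ i, ‖ρ i‖ ≤ R₁)
    (hfac : ∀ z, f z = (∏ i, (z - ρ i)) * g z) :
    ‖f 0‖ * (R / R₁) ^ Fintype.card ι ≤ ‖g 0 * reflectedProd R ρ 0‖ := by
  have hprod : ‖∏ i, (0 - ρ i)‖ ≤ R₁ ^ Fintype.card ι := by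
    rw [norm_prod, ← Finset.card_univ, ← Finset.prod_const]
    exact Finset.prod_le_prod (fun _ _ => norm_nonneg _) fun i _ => by simpa using hρ i
  calc ‖f 0‖ * (R / R₁) ^ Fintype.card ι
      ≤ R₁ ^ Fintype.card ι * ‖g 0‖ * (R / R₁) ^ Fintype.card ι := by
        rw [hfac, norm_mul]
        gcongr
    _ = ‖g 0 * reflectedProd R ρ 0‖ := by
        rw [norm_mul, norm_reflectedProd_zero hR, div_pow]
        field_simp

lemma norm_apply_zero_mul_pow_card_le (hR₁ : 0 < R₁) (hR : 0 < R) (hg : Differentiable ℂ g)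
    (hρ : ∀ i, ‖ρ i‖ ≤ R₁) (hfac : ∀ z, f z = (∏ i, (z - ρ i)) * g z)
    (hM : ∀ z, ‖z‖ = R → ‖f z‖ ≤ M) : ‖f 0‖ * (R / R₁) ^ Fintype.card ι ≤ M :=
  (norm_apply_zero_mul_pow_le hR₁ hR hρ hfac).trans
    (norm_mul_reflectedProd_le hR hg hfac hM (by simpa using hR.le))

-- The Jensen-type bound `norm_apply_zero_mul_pow_card_le` stops the extraction of zeros.
lemma exists_eq_prod_mul_ne_zero (hf : Differentiable ℂ f) (h0 : f 0 ≠ 0) (hR₁ : 0 < R₁)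
    (hR : R₁ < R) (hM : ∀ z, ‖z‖ = R → ‖f z‖ ≤ M) :
    ∃ (n : ℕ) (ρ : Fin n → ℂ) (g : ℂ → ℂ), Differentiable ℂ g ∧ (∀ i, ‖ρ i‖ ≤ R₁) ∧
      (∀ z, f z = (∏ i, (z - ρ i)) * g z) ∧ ∀ z, ‖z‖ ≤ R₁ → g z ≠ 0 := by
  classical
  let HasFactors : ℕ → Prop := fun n => ∃ (ρ : Fin n → ℂ) (g : ℂ → ℂ), Differentiable ℂ g ∧
    (∀ i, ‖ρ i‖ ≤ R₁) ∧ ∀ z, f z = (∏ i, (z - ρ i)) * g z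
  have hzero : HasFactors 0 := ⟨Fin.elim0, f, hf, fun i => i.elim0, by simp⟩
  have hratio : 1 < R / R₁ := (one_lt_div hR₁).2 hR
  obtain ⟨N, hN⟩ := pow_unbounded_of_one_lt (M / ‖f 0‖) hratio
  have hbounded (n : ℕ) (hn : HasFactors n) : n ≤ N := by
    obtain ⟨ρ, g, hg, hρ, hfac⟩ := hn
    have hle := norm_apply_zero_mul_pow_card_le hR₁ (hR₁.trans hR) hg hρ hfac hM
    rw [mul_comm, ← le_div_iff₀ (norm_pos_iff.2 h0), Fintype.card_fin] at hle
    exact ((pow_lt_pow_iff_right₀ hratio).1 (hle.trans_lt hN)).le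
  obtain ⟨ρ, g, hg, hρ, hfac⟩ := Nat.findGreatest_spec (P := HasFactors) N.zero_le hzero
  refine ⟨_, ρ, g, hg, hρ, hfac, fun z hz hgz => ?_⟩
  have hsucc : HasFactors (Nat.findGreatest HasFactors N + 1) := by
    refine ⟨Fin.cons z ρ, dslope g z, ?_, Fin.cases (by simpa using hz) (by simpa using hρ),
      fun w => ?_⟩
    · rw [← differentiableOn_univ] at hg ⊢
      exact (differentiableOn_dslope univ_mem).2 hg
    · have hslope : (w - z) * dslope g z w = g w := by
        simpa only [smul_eq_mul, hgz, sub_zero] using sub_smul_dslope g z w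
      rw [hfac w, Fin.prod_univ_succ, ← hslope]
      simp only [Fin.cons_zero, Fin.cons_succ]
      ring
  exact (Nat.lt_succ_self _).not_ge (Nat.le_findGreatest (hbounded _ hsucc) hsucc)

lemma logDeriv_sub_sum_eq (hg : Differentiable ℂ g) (hR₁ : 0 ≤ R₁) (hR : R₁ < R)
    (hρ : ∀ i, ‖ρ i‖ ≤ R₁) (hfac : ∀ z, f z = (∏ i, (z - ρ i)) * g z) {z : ℂ} (hz : ‖z‖ ≤ R₁)
    (hfz : f z ≠ 0) :
    logDeriv f z - ∑ i, 1 / (z - ρ i) =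
      logDeriv (fun w => g w * reflectedProd R ρ w) z - logDeriv (reflectedProd R ρ) z := by
  have hne := hfz
  rw [hfac, mul_ne_zero_iff, Finset.prod_ne_zero_iff] at hne
  rw [show f = fun w => (∏ i, (w - ρ i)) * g w from funext hfac,
    logDeriv_mul z (Finset.prod_ne_zero_iff.2 hne.1) hne.2 (by fun_prop) (hg z),
    logDeriv_prod hne.1 (fun i _ => by fun_prop),
    logDeriv_mul z hne.2 (reflectedProd_ne_zero hR₁ hR hρ hz) (hg z)
      (differentiable_reflectedProd z)]
  simp only [logDeriv_apply, deriv_sub_const, deriv_id'']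
  ring

lemma card_le_of_norm_le_mul_exp {B : ℝ} (hg : Differentiable ℂ g) (h0 : f 0 ≠ 0) (hR₁ : 0 < R₁)
    (hR : R₁ < R) (hρ : ∀ i, ‖ρ i‖ ≤ R₁) (hfac : ∀ z, f z = (∏ i, (z - ρ i)) * g z)
    (hM : ∀ z, ‖z‖ = R → ‖f z‖ ≤ ‖f 0‖ * Real.exp B) :
    Fintype.card ι ≤ B / Real.log (R / R₁) := by
  have hpow := le_of_mul_le_mul_left
    (norm_apply_zero_mul_pow_card_le hR₁ (hR₁.trans hR) hg hρ hfac hM) (norm_pos_iff.2 h0)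
  have hR₀ : 0 < R := hR₁.trans hR
  have hlog := Real.log_le_log (by positivity) hpow
  rwa [Real.log_pow, Real.log_exp, ← le_div_iff₀ (Real.log_pos ((one_lt_div hR₁).2 hR))] at hlog

lemma norm_logDeriv_sub_sum_le {B r : ℝ} (hB : 0 < B) (hg : Differentiable ℂ g)
    (hrR₁ : r < R₁) (hR : R₁ < R) (hρ : ∀ i, ‖ρ i‖ ≤ R₁)
    (hfac : ∀ z, f z = (∏ i, (z - ρ i)) * g z) (hg_ne : ∀ z, ‖z‖ ≤ R₁ → g z ≠ 0)
    (hM : ∀ z, ‖z‖ = R → ‖f z‖ ≤ ‖f 0‖ * Real.exp B) {z : ℂ} (hz : ‖z‖ ≤ r) (hfz : f z ≠ 0) :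
    ‖logDeriv f z - ∑ i, 1 / (z - ρ i)‖ ≤
      4 * (R₁ + r) / (R₁ - r) ^ 2 * B + Fintype.card ι * (R₁ / (R ^ 2 - R₁ ^ 2)) := by
  have hR₁ : 0 < R₁ := (norm_nonneg z).trans_lt (hz.trans_lt hrR₁)
  have hR₀ : 0 < R := hR₁.trans hR
  have hzR₁ : ‖z‖ ≤ R₁ := hz.trans hrR₁.le
  have hzero : ‖f 0‖ ≤ ‖g 0 * reflectedProd R ρ 0‖ :=
    (le_mul_of_one_le_right (norm_nonneg _) (one_le_pow₀ ((one_lt_div hR₁).2 hR).le)).trans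
      (norm_apply_zero_mul_pow_le hR₁ hR₀ hρ hfac)
  rw [logDeriv_sub_sum_eq hg hR₁.le hR hρ hfac hzR₁ hfz]
  refine (norm_sub_le _ _).trans (add_le_add ?_ (norm_logDeriv_reflectedProd_le hR₁.le hR hρ hzR₁))
  refine norm_logDeriv_le_of_norm_le_mul_exp hrR₁ hB
    (hg.mul differentiable_reflectedProd).differentiableOn (fun w hw => ?_) (fun w hw => ?_) hz
  all_goals rw [mem_ball_zero_iff] at hw
  · exact mul_ne_zero (hg_ne w hw.le) (reflectedProd_ne_zero hR₁.le hR hρ hw.le)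
  · exact (norm_mul_reflectedProd_le hR₀ hg hfac hM (hw.trans hR).le).trans (by gcongr; exact hzero)

end Factorization

lemma exists_landau_const {r : ℝ} (hr : 0 ≤ r) (hrR₁ : r < R₁) (hR : R₁ < R) :
    ∃ c : ℝ, 0 < c ∧ ∀ f : ℂ → ℂ, Differentiable ℂ f → f 0 ≠ 0 → ∀ B : ℝ, 0 < B →
      (∀ z, ‖z‖ = R → ‖f z‖ ≤ ‖f 0‖ * Real.exp B) →
      ∃ (n : ℕ) (ρ : Fin n → ℂ), (n : ℝ) ≤ c * B ∧ (∀ i, ‖ρ i‖ ≤ R₁ ∧ f (ρ i) = 0) ∧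
        ∀ z, ‖z‖ ≤ r → f z ≠ 0 → ‖logDeriv f z - ∑ i, 1 / (z - ρ i)‖ ≤ c * B := by
  have hR₁ : 0 < R₁ := hr.trans_lt hrR₁
  have hlog : 0 < Real.log (R / R₁) := Real.log_pos ((one_lt_div hR₁).2 hR)
  have : 0 < R₁ - r := by linarith
  have : 0 < R ^ 2 - R₁ ^ 2 := by nlinarith
  set c₁ := 4 * (R₁ + r) / (R₁ - r) ^ 2
  set c₂ := R₁ / (R ^ 2 - R₁ ^ 2)
  have : 0 < c₁ := by positivity
  have : 0 < c₂ := by positivity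
  refine ⟨c₁ + (1 + c₂) / Real.log (R / R₁), by positivity, fun f hf h0 B hB hM => ?_⟩
  obtain ⟨n, ρ, g, hg, hρ, hfac, hg_ne⟩ := exists_eq_prod_mul_ne_zero hf h0 hR₁ hR hM
  have hn := card_le_of_norm_le_mul_exp hg h0 hR₁ hR hρ hfac hM
  rw [Fintype.card_fin] at hn
  refine ⟨n, ρ, ?_, fun i => ⟨hρ i, ?_⟩, fun z hz hfz => ?_⟩
  · calc (n : ℝ) ≤ B / Real.log (R / R₁) := hn
      _ ≤ c₁ * B + B / Real.log (R / R₁) + c₂ * (B / Real.log (R / R₁)) := by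
        have : 0 ≤ c₁ * B + c₂ * (B / Real.log (R / R₁)) := by positivity
        linarith
      _ = (c₁ + (1 + c₂) / Real.log (R / R₁)) * B := by ring
  · rw [hfac, Finset.prod_eq_zero (Finset.mem_univ i) (sub_self _), zero_mul]
  · calc ‖logDeriv f z - ∑ i, 1 / (z - ρ i)‖ ≤ c₁ * B + n * c₂ := by
          simpa only [Fintype.card_fin] using
            norm_logDeriv_sub_sum_le hB hg hrR₁ hR hρ hfac hg_ne hM hz hfz
      _ ≤ c₁ * B + B / Real.log (R / R₁) * c₂ + B / Real.log (R / R₁) := by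
        have : 0 ≤ B / Real.log (R / R₁) := by positivity
        have : n * c₂ ≤ B / Real.log (R / R₁) * c₂ := by gcongr
        linarith
      _ = (c₁ + (1 + c₂) / Real.log (R / R₁)) * B := by ring

end LandauLemma

/-! ### Shifting integrals along vertical lines -/

section VerticalLine

open Complex Set MeasureTheory Filter Topology

variable {F : ℂ → ℂ} {a b M r : ℝ}

lemma integrable_one_add_abs_rpow_neg (hr : 1 < r) :
    Integrable fun t : ℝ => (1 + |t|) ^ (-r) := by
  simpa using integrable_one_add_norm (E := ℝ) (μ := volume) (r := r) (by simpa using hr)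

lemma continuous_verticalLine (hF : ∀ t : ℝ, ContinuousAt F (a + t * I)) :
    Continuous fun t : ℝ => F (a + t * I) :=
  continuous_iff_continuousAt.2 fun t =>
    ContinuousAt.comp (f := fun t : ℝ => (a + t * I : ℂ)) (hF t) (by fun_prop)

lemma integrable_verticalLine (hr : 1 < r) (hF : ∀ t : ℝ, ContinuousAt F (a + t * I))
    (hM : ∀ t : ℝ, ‖F (a + t * I)‖ ≤ M * (1 + |t|) ^ (-r)) :
    Integrable fun t : ℝ => F (a + t * I) :=
  ((integrable_one_add_abs_rpow_neg hr).const_mul M).mono'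
    (continuous_verticalLine hF).aestronglyMeasurable (Eventually.of_forall hM)

lemma tendsto_one_add_rpow_neg {α : Type*} {l : Filter α} {x : α → ℝ} (hr : 0 < r)
    (hx : Tendsto x l atTop) : Tendsto (fun i => (1 + x i) ^ (-r)) l (𝓝 0) :=
  (tendsto_rpow_neg_atTop hr).comp (tendsto_atTop_add_const_left _ 1 hx)

lemma tendsto_integral_horizontal (hab : a ≤ b) (hr : 0 < r)
    (hM : ∀ s : ℂ, a ≤ s.re → s.re ≤ b → ‖F s‖ ≤ M * (1 + |s.im|) ^ (-r)) {y : ℝ → ℝ}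
    (hy : Tendsto (fun T => |y T|) atTop atTop) :
    Tendsto (fun T : ℝ => ∫ x in a..b, F (x + y T * I)) atTop (𝓝 0) := by
  have hlim : Tendsto (fun T : ℝ => M * (1 + |y T|) ^ (-r) * |b - a|) atTop (𝓝 0) := by
    simpa using ((tendsto_one_add_rpow_neg hr hy).const_mul M).mul_const |b - a|
  refine squeeze_zero_norm (fun T => ?_) hlim
  refine intervalIntegral.norm_integral_le_of_norm_le_const fun x hx => ?_
  rw [uIoc_of_le hab] at hx
  simpa using hM (x + y T * I) (by simpa using hx.1.le) (by simpa using hx.2)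

lemma integral_verticalLine_eq (hab : a ≤ b) (hr : 1 < r)
    (hF : ∀ s : ℂ, a ≤ s.re → s.re ≤ b → DifferentiableAt ℂ F s)
    (hM : ∀ s : ℂ, a ≤ s.re → s.re ≤ b → ‖F s‖ ≤ M * (1 + |s.im|) ^ (-r)) :
    ∫ t : ℝ, F (a + t * I) = ∫ t : ℝ, F (b + t * I) := by
  have hline (x : ℝ) (hx : a ≤ x) (hx' : x ≤ b) :
      Tendsto (fun T : ℝ => I • ∫ t in (-T)..T, F (x + t * I)) atTop
        (𝓝 (I • ∫ t : ℝ, F (x + t * I))) :=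
    (intervalIntegral_tendsto_integral (integrable_verticalLine hr
      (fun t => (hF _ (by simpa) (by simpa)).continuousAt)
      (fun t => by simpa using hM (x + t * I) (by simpa) (by simpa)))
      tendsto_neg_atTop_atBot tendsto_id).const_smul I
  have hbottom := tendsto_integral_horizontal hab (by linarith) hM (y := fun T => -T)
    (by simpa using tendsto_abs_atTop_atTop)
  have htop := tendsto_integral_horizontal hab (by linarith) hM (y := id) tendsto_abs_atTop_atTop
  have hrect (T : ℝ) : (∫ x in a..b, F (x + (-T : ℝ) * I)) - (∫ x in a..b, F (x + T * I)) +
      I • (∫ t in (-T)..T, F (b + t * I)) - I • (∫ t in (-T)..T, F (a + t * I)) = 0 := by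
    simpa using integral_boundary_rect_eq_zero_of_differentiableOn F ⟨a, -T⟩ ⟨b, T⟩ fun s hs => by
      rw [mem_reProdIm, uIcc_of_le hab] at hs
      exact (hF s hs.1.1 hs.1.2).differentiableWithinAt
  have hlim := ((hbottom.sub htop).add (hline b hab le_rfl)).sub (hline a le_rfl hab)
  simp only [id, hrect, sub_self, zero_add] at hlim
  have hzero := tendsto_nhds_unique hlim tendsto_const_nhds
  rw [← smul_sub, smul_eq_zero_iff_right I_ne_zero, sub_eq_zero] at hzero
  exact hzero.symm

lemma integral_verticalLine_eq_zero {p : ℝ} (hr : 1 < r)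
    (hF : ∀ s : ℂ, a ≤ s.re → DifferentiableAt ℂ F s)
    (hM : ∀ s : ℂ, a ≤ s.re → ‖F s‖ ≤ M * (1 + ‖s - p‖) ^ (-r)) :
    ∫ t : ℝ, F (a + t * I) = 0 := by
  have hM_nonneg : 0 ≤ M := nonneg_of_mul_nonneg_left ((norm_nonneg _).trans (hM a (by simp)))
    (by positivity)
  have hM_im (s : ℂ) (hs : a ≤ s.re) : ‖F s‖ ≤ M * (1 + |s.im|) ^ (-r) := by
    refine (hM s hs).trans (mul_le_mul_of_nonneg_left ?_ hM_nonneg)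
    refine Real.rpow_le_rpow_of_nonpos (by positivity) ?_ (by linarith)
    simpa using abs_im_le_norm (s - p)
  have hshift : ∀ᶠ b : ℝ in atTop, ∫ t : ℝ, F (b + t * I) = ∫ t : ℝ, F (a + t * I) := by
    filter_upwards [eventually_ge_atTop a] with b hb
    exact (integral_verticalLine_eq hb hr (fun s hs _ => hF s hs) fun s hs _ => hM_im s hs).symm
  have hpointwise (t : ℝ) : Tendsto (fun b : ℝ => F (b + t * I)) atTop (𝓝 0) := by
    have hnorm : Tendsto (fun b : ℝ => ‖(b + t * I : ℂ) - p‖) atTop atTop := by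
      refine tendsto_atTop_mono (fun b => ?_) (tendsto_atTop_add_const_right atTop (-p) tendsto_id)
      simpa [sub_eq_add_neg] using re_le_norm ((b + t * I : ℂ) - p)
    have hlim := (tendsto_one_add_rpow_neg (by linarith : 0 < r) hnorm).const_mul M
    rw [mul_zero] at hlim
    refine squeeze_zero_norm' ?_ hlim
    filter_upwards [eventually_ge_atTop a] with b hb using hM _ (by simpa using hb)
  have hlim : Tendsto (fun b : ℝ => ∫ t : ℝ, F (b + t * I)) atTop (𝓝 (∫ _ : ℝ, 0)) := by
    refine tendsto_integral_filter_of_dominated_convergence (fun t => M * (1 + |t|) ^ (-r)) ?_ ?_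
      ((integrable_one_add_abs_rpow_neg hr).const_mul M) (Eventually.of_forall hpointwise)
    · filter_upwards [eventually_ge_atTop a] with b hb using (continuous_verticalLine
        fun t => (hF _ (by simpa using hb)).continuousAt).aestronglyMeasurable
    · filter_upwards [eventually_ge_atTop a] with b hb
      exact Eventually.of_forall fun t => by simpa using hM_im (b + t * I) (by simpa using hb)
  rw [integral_zero] at hlim
  exact tendsto_nhds_unique (tendsto_const_nhds.congr' (hshift.mono fun _ h => h.symm)) hlim

end VerticalLine

/-! ### The transform of `ψ(x) - x` under the Riemann hypothesis -/

section PsiErrorTransform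

open Complex Set MeasureTheory

lemma re_eq_half_of_regularizedZeta_eq_zero (hRH : RiemannHypothesis) {s : ℂ} (hs : 0 < s.re)
    (hzero : regularizedZeta s = 0) : s.re = 1 / 2 := by
  have hs1 : s ≠ 1 := by
    rintro rfl
    exact one_ne_zero (regularizedZeta_one.symm.trans hzero)
  rw [regularizedZeta_of_ne hs1] at hzero
  refine hRH s ((mul_eq_zero.1 hzero).resolve_left (sub_ne_zero.2 hs1)) ?_ hs1
  rintro ⟨n, rfl⟩
  simp only [neg_mul, neg_re, mul_re, re_ofNat, add_re, natCast_re, one_re, im_ofNat] at hs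
  linarith [n.cast_nonneg (α := ℝ)]

lemma regularizedZeta_ne_zero_of_half_lt_re (hRH : RiemannHypothesis) {s : ℂ}
    (hs : 1 / 2 < s.re) : regularizedZeta s ≠ 0 :=
  fun hzero => hs.ne' (re_eq_half_of_regularizedZeta_eq_zero hRH (by linarith) hzero)

/-- The function `-ζ'(s)/ζ(s) - s/(s - 1)`, which for `Re s > 1` is `s` times the Mellin transform
`∫₁^∞ (ψ(t) - t) t^(-s-1) dt`. Written with `(s - 1) ζ(s)` it has no singularity at `s = 1`. -/
noncomputable def psiErrorTransform (s : ℂ) : ℂ := -logDeriv regularizedZeta s - 1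

lemma differentiableAt_psiErrorTransform (hRH : RiemannHypothesis) {s : ℂ} (hs : 1 / 2 < s.re) :
    DifferentiableAt ℂ psiErrorTransform s := by
  have hderiv : Differentiable ℂ (deriv regularizedZeta) :=
    (differentiable_regularizedZeta.contDiff (n := 2)).differentiable_deriv_two
  exact (((hderiv s).div (differentiable_regularizedZeta s)
    (regularizedZeta_ne_zero_of_half_lt_re hRH hs)).neg).sub_const 1

lemma continuous_psiErrorTransform_verticalLine (hRH : RiemannHypothesis) {σ : ℝ}
    (hσ : 1 / 2 < σ) : Continuous fun t : ℝ => psiErrorTransform (σ + t * I) :=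
  continuous_verticalLine fun t =>
    (differentiableAt_psiErrorTransform hRH (by simpa using hσ)).continuousAt

lemma psiErrorTransform_eq_LSeries_sub {s : ℂ} (hs : 1 < s.re) : psiErrorTransform s =
    LSeries (fun n => (ArithmeticFunction.vonMangoldt n : ℂ)) s - s / (s - 1) := by
  have : s - 1 ≠ 0 := sub_ne_zero.2 (ne_one_of_one_lt_re hs)
  rw [psiErrorTransform, logDeriv_regularizedZeta hs]
  field_simp
  ring

lemma psiErrorTransform_eq_mul_tailMellin {s : ℂ} (hs : 1 < s.re) : psiErrorTransform s =
    s * tailMellin (fun t => ((Chebyshev.psi t - t : ℝ) : ℂ)) s := by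
  rw [psiErrorTransform_eq_LSeries_sub hs, LSeries_vonMangoldt_eq hs, add_sub_cancel_left]

lemma exists_norm_LSeries_le {f : ℕ → ℂ} {σ : ℝ} (hf : LSeriesSummable f σ) :
    ∃ C : ℝ, 0 ≤ C ∧ ∀ s : ℂ, σ ≤ s.re → ‖LSeries f s‖ ≤ C :=
  ⟨∑' n, ‖LSeries.term f σ n‖, tsum_nonneg fun _ => norm_nonneg _, fun _ hs =>
    tsum_of_norm_bounded hf.norm.hasSum (LSeries.norm_term_le_of_re_le_re f (by simpa using hs))⟩

lemma exists_norm_psiErrorTransform_le {σ : ℝ} (hσ : 1 < σ) :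
    ∃ C : ℝ, 0 ≤ C ∧ ∀ s : ℂ, σ ≤ s.re → ‖psiErrorTransform s‖ ≤ C := by
  obtain ⟨C, hC, hLSeries⟩ := exists_norm_LSeries_le (σ := σ)
    (ArithmeticFunction.LSeriesSummable_vonMangoldt (by rwa [ofReal_re]))
  have : 0 < σ - 1 := by linarith
  refine ⟨C + (1 + 1 / (σ - 1)), by positivity, fun s hs => ?_⟩
  have hs1 : s - 1 ≠ 0 := sub_ne_zero.2 (ne_one_of_one_lt_re (hσ.trans_le hs))
  have hnorm : σ - 1 ≤ ‖s - 1‖ := by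
    refine le_trans ?_ (re_le_norm _)
    rw [sub_re, one_re]
    linarith
  have hpole : s / (s - 1) = 1 + 1 / (s - 1) := by field_simp; ring
  rw [psiErrorTransform_eq_LSeries_sub (hσ.trans_le hs), hpole]
  refine (norm_sub_le _ _).trans (add_le_add (hLSeries s hs) ((norm_add_le _ _).trans ?_))
  rw [norm_div, norm_one]
  gcongr

lemma exists_le_norm_regularizedZeta {σ : ℝ} (hσ : 1 < σ) :
    ∃ δ : ℝ, 0 < δ ∧ ∀ s : ℂ, σ ≤ s.re → δ ≤ ‖regularizedZeta s‖ := by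
  obtain ⟨C, hC, hmoebius⟩ := exists_norm_LSeries_le (σ := σ)
    (ArithmeticFunction.LSeriesSummable_moebius_iff.2 (by rwa [ofReal_re]))
  have : 0 < σ - 1 := by linarith
  refine ⟨(σ - 1) / (C + 1), by positivity, fun s hs => ?_⟩
  have hs1 := hσ.trans_le hs
  have hinv : ‖riemannZeta s‖ * ‖LSeries (fun n => (ArithmeticFunction.moebius n : ℂ)) s‖ = 1 := by
    rw [← norm_mul, ← LSeries_one_eq_riemannZeta hs1,
      LSeries_one_mul_Lseries_moebius hs1, norm_one]
  have hnorm : σ - 1 ≤ ‖s - 1‖ := by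
    refine le_trans ?_ (re_le_norm _)
    rw [sub_re, one_re]
    linarith
  rw [regularizedZeta_of_ne (ne_one_of_one_lt_re hs1), norm_mul, div_le_iff₀ (by positivity)]
  calc σ - 1 = (σ - 1) * (‖riemannZeta s‖ * _) := by rw [hinv, mul_one]
    _ ≤ ‖s - 1‖ * (‖riemannZeta s‖ * (C + 1)) := by
      gcongr
      linarith [hmoebius s hs]
    _ = ‖s - 1‖ * ‖riemannZeta s‖ * (C + 1) := by ring

lemma half_lt_log_abs_add_two (t : ℝ) : 1 / 2 < Real.log (|t| + 2) :=
  half_lt_log (by linarith [abs_nonneg t])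

lemma exists_mul_pow_le_exp_mul_log {K : ℝ} (hK : 0 < K) (n : ℕ) :
    ∃ B : ℝ, 0 < B ∧ ∀ t : ℝ, K * (|t| + 2) ^ n ≤ Real.exp (B * Real.log (|t| + 2)) := by
  refine ⟨n + 1 + 2 * |Real.log K|, by positivity, fun t => ?_⟩
  have hlog := half_lt_log_abs_add_two t
  rw [← Real.log_le_iff_le_exp (by positivity), Real.log_mul (by positivity) (by positivity),
    Real.log_pow]
  nlinarith [le_abs_self (Real.log K), abs_nonneg (Real.log K)]

lemma exists_norm_regularizedZeta_le_mul_exp : ∃ B : ℝ, 0 < B ∧ ∀ (t : ℝ) (z : ℂ), ‖z‖ ≤ 1.9 →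
    ‖regularizedZeta (z + (2 + t * I))‖ ≤
      ‖regularizedZeta (2 + t * I)‖ * Real.exp (B * Real.log (|t| + 2)) := by
  obtain ⟨δ, hδ, hlow⟩ := exists_le_norm_regularizedZeta one_lt_two
  obtain ⟨B, hB, hexp⟩ := exists_mul_pow_le_exp_mul_log (K := 69 / δ) (by positivity) 2
  refine ⟨B, hB, fun t z hz => ?_⟩
  have hre : 1 / 10 ≤ (z + (2 + t * I)).re := by
    have hz_re := (abs_le.1 ((abs_re_le_norm z).trans hz)).1
    norm_num at hz_re ⊢
    linarith
  have hnorm : ‖z + (2 + t * I)‖ ≤ 1.9 + (2 + |t|) :=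
    (norm_add_le _ _).trans (add_le_add hz ((norm_add_le _ _).trans (by simp)))
  calc ‖regularizedZeta (z + (2 + t * I))‖ ≤ 11 * (‖z + (2 + t * I)‖ + 1) ^ 2 :=
        norm_regularizedZeta_le hre
    _ ≤ 11 * (1.9 + (2 + |t|) + 1) ^ 2 := by gcongr
    _ ≤ 69 * (|t| + 2) ^ 2 := by nlinarith [abs_nonneg t]
    _ = δ * (69 / δ * (|t| + 2) ^ 2) := by field_simp
    _ ≤ _ := by
      gcongr
      · exact hlow _ (by simp)
      · exact hexp t

lemma exists_norm_logDeriv_regularizedZeta_sub_sum_le (hRH : RiemannHypothesis) :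
    ∃ c : ℝ, 0 < c ∧ ∀ t : ℝ, ∃ (n : ℕ) (ρ : Fin n → ℂ), n ≤ c * Real.log (|t| + 2) ∧
      (∀ i, (ρ i).re = 1 / 2) ∧ ∀ s : ℂ, ‖s - (2 + t * I)‖ ≤ 1.65 → 1 / 2 < s.re →
        ‖logDeriv regularizedZeta s - ∑ i, 1 / (s - ρ i)‖ ≤ c * Real.log (|t| + 2) := by
  obtain ⟨c, hc, hlandau⟩ :=
    exists_landau_const (r := 1.65) (R₁ := 1.8) (R := 1.9) (by norm_num) (by norm_num) (by norm_num)
  obtain ⟨B, hB, hgrowth⟩ := exists_norm_regularizedZeta_le_mul_exp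
  refine ⟨c * B, by positivity, fun t => ?_⟩
  have hlog := half_lt_log_abs_add_two t
  obtain ⟨n, ρ, hn, hρ, hsum⟩ := hlandau (fun z => regularizedZeta (z + (2 + t * I)))
    (differentiable_regularizedZeta.comp (by fun_prop))
    (by rw [zero_add]; exact regularizedZeta_ne_zero_of_one_lt_re (by simp))
    (B * Real.log (|t| + 2)) (by positivity)
    (fun z hz => by simpa only [zero_add] using hgrowth t z hz.le)
  rw [← mul_assoc] at hn hsum
  refine ⟨n, fun i => ρ i + (2 + t * I), hn, fun i => ?_, fun s hs hs_re => ?_⟩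
  · refine re_eq_half_of_regularizedZeta_eq_zero hRH ?_ (hρ i).2
    have hρ_re := (abs_le.1 ((abs_re_le_norm (ρ i)).trans (hρ i).1)).1
    norm_num at hρ_re ⊢
    linarith
  · have hz := hsum (s - (2 + t * I)) hs
      (by simpa using regularizedZeta_ne_zero_of_half_lt_re hRH hs_re)
    simp only [logDeriv_apply, deriv_comp_add_const, sub_add_cancel] at hz
    simpa only [logDeriv_apply, sub_add_eq_sub_sub_swap] using hz

lemma exists_norm_psiErrorTransform_le_div (hRH : RiemannHypothesis) :
    ∃ c : ℝ, 0 < c ∧ ∀ s : ℂ, 1 / 2 < s.re → s.re ≤ 3 / 2 →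
      ‖psiErrorTransform s‖ ≤ c * Real.log (|s.im| + 2) / (s.re - 1 / 2) := by
  obtain ⟨c, hc, hlandau⟩ := exists_norm_logDeriv_regularizedZeta_sub_sum_le hRH
  refine ⟨2 * c + 2, by positivity, fun s hs hs' => ?_⟩
  obtain ⟨n, ρ, hn, hρ, hsum⟩ := hlandau s.im
  have hlog := half_lt_log_abs_add_two s.im
  set L := Real.log (|s.im| + 2)
  have hδ : 0 < s.re - 1 / 2 := by linarith
  have hdist : ‖s - (2 + s.im * I)‖ ≤ 1.65 := by
    have hsub : s - (2 + s.im * I) = ((s.re - 2 : ℝ) : ℂ) := by apply Complex.ext <;> simp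
    rw [hsub, norm_real, Real.norm_eq_abs, abs_le]
    constructor <;> norm_num <;> linarith
  have hpoles : ‖∑ i, 1 / (s - ρ i)‖ ≤ c * L / (s.re - 1 / 2) := by
    refine (norm_sum_le_of_le (n := fun _ => 1 / (s.re - 1 / 2)) _ fun i _ => ?_).trans ?_
    · rw [norm_div, norm_one]
      refine one_div_le_one_div_of_le hδ (le_trans ?_ (re_le_norm _))
      rw [sub_re, hρ i]
    · rw [Finset.sum_const, Finset.card_univ, Fintype.card_fin, nsmul_eq_mul, mul_one_div]
      gcongr
  have hweaken {a : ℝ} (ha : 0 ≤ a) : a ≤ a / (s.re - 1 / 2) :=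
    le_div_self ha hδ (by linarith)
  calc ‖psiErrorTransform s‖
      = ‖-(logDeriv regularizedZeta s - ∑ i, 1 / (s - ρ i)) - ∑ i, 1 / (s - ρ i) - 1‖ := by
        rw [psiErrorTransform]
        ring_nf
    _ ≤ c * L + c * L / (s.re - 1 / 2) + 1 := by
        refine (norm_sub_le _ _).trans (add_le_add ((norm_sub_le _ _).trans
          (add_le_add ?_ hpoles)) norm_one.le)
        rw [norm_neg]
        exact hsum s hdist hs
    _ ≤ c * L / (s.re - 1 / 2) + c * L / (s.re - 1 / 2) + 2 * L / (s.re - 1 / 2) := by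
        gcongr
        · exact hweaken (by positivity)
        · exact (by linarith : 1 ≤ 2 * L).trans (hweaken (by positivity))
    _ = (2 * c + 2) * L / (s.re - 1 / 2) := by ring

/-- The Poisson kernel `δ / (δ² + x²)` of the half plane, without the usual factor `1/π`. -/
noncomputable def halfPlanePoisson (δ x : ℝ) : ℝ := δ / (δ ^ 2 + x ^ 2)

section PoissonKernel

variable {δ : ℝ}

lemma halfPlanePoisson_nonneg (hδ : 0 ≤ δ) (x : ℝ) : 0 ≤ halfPlanePoisson δ x := by
  unfold halfPlanePoisson
  positivity

lemma continuous_halfPlanePoisson (hδ : 0 < δ) : Continuous (halfPlanePoisson δ) :=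
  continuous_const.div (by fun_prop) fun x => by positivity

lemma integral_halfPlanePoisson_le_pi (hδ : 0 < δ) (γ a b : ℝ) :
    ∫ t in a..b, halfPlanePoisson δ (t - γ) ≤ Real.pi := by
  have hderiv : ∀ t ∈ uIcc a b,
      HasDerivAt (fun t => Real.arctan ((t - γ) / δ)) (halfPlanePoisson δ (t - γ)) t := by
    intro t _
    convert! (((hasDerivAt_id t).sub_const γ).div_const δ).arctan using 1
    simp only [halfPlanePoisson, id]
    field_simp
  rw [intervalIntegral.integral_eq_sub_of_hasDerivAt hderiv
    (((continuous_halfPlanePoisson hδ).comp (by fun_prop)).intervalIntegrable _ _)]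
  linarith [Real.arctan_lt_pi_div_two ((b - γ) / δ), Real.neg_pi_div_two_lt_arctan ((a - γ) / δ)]

lemma re_one_div_sub_eq_halfPlanePoisson (s ρ : ℂ) :
    (1 / (s - ρ)).re = halfPlanePoisson (s.re - ρ.re) (s.im - ρ.im) := by
  rw [one_div, inv_re, normSq_apply, sub_re, sub_im, halfPlanePoisson, sq, sq]

lemma integral_const_add_sum_halfPlanePoisson_le {ι : Type*} [Fintype ι] (hδ : 0 < δ) (K a : ℝ)
    (γ : ι → ℝ) : ∫ t in a..(a + 1), (K + ∑ i, halfPlanePoisson δ (t - γ i)) ≤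
      K + Fintype.card ι * Real.pi := by
  have hcont (i : ι) : Continuous fun t : ℝ => halfPlanePoisson δ (t - γ i) :=
    (continuous_halfPlanePoisson hδ).comp (by fun_prop)
  rw [intervalIntegral.integral_add (by simp)
      ((continuous_finsetSum _ fun i _ => hcont i).intervalIntegrable _ _),
    intervalIntegral.integral_finsetSum fun i _ => (hcont i).intervalIntegrable _ _,
    intervalIntegral.integral_const, add_sub_cancel_left, one_smul]
  gcongr
  refine (Finset.sum_le_sum fun i _ => integral_halfPlanePoisson_le_pi hδ _ _ _).trans_eq ?_
  rw [Finset.sum_const, Finset.card_univ, nsmul_eq_mul]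

end PoissonKernel

lemma log_abs_add_half_le (a : ℝ) : Real.log (|a + 1 / 2| + 2) ≤ 2 * Real.log (|a| + 2) := by
  have habs : |a + 1 / 2| ≤ |a| + 1 / 2 := (abs_add_le _ _).trans (by norm_num)
  calc Real.log (|a + 1 / 2| + 2) ≤ Real.log ((|a| + 2) ^ 2) := by
        gcongr
        nlinarith [abs_nonneg a]
    _ = 2 * Real.log (|a| + 2) := by rw [Real.log_pow]; norm_num

lemma abs_re_psiErrorTransform_le {n : ℕ} {ρ : Fin n → ℂ} (hρ : ∀ i, (ρ i).re = 1 / 2) {s : ℂ}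
    {D : ℝ} (hs : 1 / 2 < s.re)
    (hD : ‖logDeriv regularizedZeta s - ∑ i, 1 / (s - ρ i)‖ ≤ D) :
    |(psiErrorTransform s).re| ≤
      1 + D + ∑ i, halfPlanePoisson (s.re - 1 / 2) (s.im - (ρ i).im) := by
  have hre := (abs_re_le_norm _).trans hD
  have hnonneg : 0 ≤ ∑ i, halfPlanePoisson (s.re - 1 / 2) (s.im - (ρ i).im) :=
    Finset.sum_nonneg fun i _ => halfPlanePoisson_nonneg (by linarith) _
  simp only [sub_re, re_sum, re_one_div_sub_eq_halfPlanePoisson, hρ] at hre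
  rw [psiErrorTransform, sub_re, neg_re, one_re]
  rw [abs_le] at hre ⊢
  constructor <;> linarith

lemma norm_add_mul_I_sub_two_add_le {σ t a : ℝ} (hσ : 1 / 2 ≤ σ) (hσ' : σ ≤ 3 / 2)
    (ht : t ∈ Icc a (a + 1)) : ‖(σ + t * I : ℂ) - (2 + ((a + 1 / 2 : ℝ) : ℂ) * I)‖ ≤ 1.65 := by
  have hsub : (σ + t * I : ℂ) - (2 + ((a + 1 / 2 : ℝ) : ℂ) * I) =
      ((σ - 2 : ℝ) : ℂ) + ((t - (a + 1 / 2) : ℝ) : ℂ) * I := by push_cast; ring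
  rw [hsub, norm_add_mul_I, Real.sqrt_le_left (by norm_num)]
  norm_num
  nlinarith [ht.1, ht.2]

lemma exists_integral_abs_re_psiErrorTransform_le (hRH : RiemannHypothesis) :
    ∃ c : ℝ, 0 < c ∧ ∀ σ a : ℝ, 1 / 2 < σ → σ ≤ 3 / 2 →
      ∫ t in a..(a + 1), |(psiErrorTransform (σ + t * I)).re| ≤ c * Real.log (|a| + 2) := by
  obtain ⟨c, hc, hlandau⟩ := exists_norm_logDeriv_regularizedZeta_sub_sum_le hRH
  refine ⟨2 * (2 + c + c * Real.pi), by positivity, fun σ a hσ hσ' => ?_⟩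
  obtain ⟨n, ρ, hn, hρ, hsum⟩ := hlandau (a + 1 / 2)
  have hlog := half_lt_log_abs_add_two (a + 1 / 2)
  have hlog_le := log_abs_add_half_le a
  set L := Real.log (|a + 1 / 2| + 2)
  have hδ : 0 < σ - 1 / 2 := by linarith
  have hpoint : ∀ t ∈ Icc a (a + 1), |(psiErrorTransform (σ + t * I)).re| ≤
      1 + c * L + ∑ i, halfPlanePoisson (σ - 1 / 2) (t - (ρ i).im) := fun t ht => by
    have hs : 1 / 2 < (σ + t * I : ℂ).re := by simpa using hσ
    simpa using abs_re_psiErrorTransform_le hρ hs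
      (hsum _ (norm_add_mul_I_sub_two_add_le hσ.le hσ' ht) hs)
  have hcont : Continuous fun t : ℝ => ∑ i, halfPlanePoisson (σ - 1 / 2) (t - (ρ i).im) :=
    continuous_finsetSum _ fun i _ => (continuous_halfPlanePoisson hδ).comp (by fun_prop)
  calc ∫ t in a..(a + 1), |(psiErrorTransform (σ + t * I)).re|
      ≤ ∫ t in a..(a + 1), (1 + c * L + ∑ i, halfPlanePoisson (σ - 1 / 2) (t - (ρ i).im)) :=
        intervalIntegral.integral_mono_on (by linarith)
          ((continuous_re.comp (continuous_psiErrorTransform_verticalLine hRH hσ)).abs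
            |>.intervalIntegrable _ _)
          ((continuous_const.add hcont).intervalIntegrable _ _) hpoint
    _ ≤ 1 + c * L + n * Real.pi := by
        simpa only [Fintype.card_fin] using
          integral_const_add_sum_halfPlanePoisson_le hδ (1 + c * L) a fun i => (ρ i).im
    _ ≤ 2 * L + c * L + c * L * Real.pi := by
        gcongr
        linarith
    _ ≤ 2 * (2 + c + c * Real.pi) * Real.log (|a| + 2) := by
        have : 0 < 2 + c + c * Real.pi := by positivity
        nlinarith

end PsiErrorTransform

/-! ### The averaging kernel and the symmetrised contour integral -/

section AverageKernel

open Complex Set MeasureTheory Filter ComplexConjugate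

/-- The numerator `(e^((u+h)s) - e^(us)) / h - (e^s - 1)` of `averageKernel`. -/
noncomputable def averageKernelNumer (u h : ℝ) (s : ℂ) : ℂ :=
  (exp ((u + h) * s) - exp (u * s)) / h - (exp s - 1)

/-- The entire function `averageKernelNumer u h s / s²`. Integrated along a vertical line against
`psiErrorTransform`, it produces the mean of `ψ(e^v) - e^v` over `v ∈ [u, u + h]` minus the mean
over `[0, 1]`; the second mean is there to cancel the pole at `s = 0`. -/
noncomputable def averageKernel (u h : ℝ) : ℂ → ℂ :=
  dslope (dslope (averageKernelNumer u h) 0) 0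

variable {u h : ℝ}

lemma differentiable_averageKernel : Differentiable ℂ (averageKernel u h) := by
  have hdslope {f : ℂ → ℂ} (hf : Differentiable ℂ f) : Differentiable ℂ (dslope f 0) := by
    rw [← differentiableOn_univ, differentiableOn_dslope univ_mem]
    exact hf.differentiableOn
  have hnumer : Differentiable ℂ (averageKernelNumer u h) := by
    unfold averageKernelNumer
    fun_prop
  exact hdslope (hdslope hnumer)

lemma averageKernelNumer_zero : averageKernelNumer u h 0 = 0 := by simp [averageKernelNumer]

lemma hasDerivAt_averageKernelNumer_zero (hh : h ≠ 0) :
    HasDerivAt (averageKernelNumer u h) 0 0 := by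
  have hexp (a : ℂ) : HasDerivAt (fun s : ℂ => exp (a * s)) a 0 := by
    simpa using ((hasDerivAt_id (0:ℂ)).const_mul a).cexp
  have hcancel : (u + h - u : ℂ) / h - 1 = 0 := by
    rw [add_sub_cancel_left, div_self (ofReal_ne_zero.2 hh), sub_self]
  have hderiv := (((hexp (u + h)).fun_sub (hexp u)).div_const (h:ℂ)).fun_sub
    ((hexp 1).sub_const 1)
  rw [hcancel] at hderiv
  refine hderiv.congr_of_eventuallyEq (Eventually.of_forall fun s => ?_)
  simp [averageKernelNumer]

lemma averageKernel_eq_div_sq (hh : h ≠ 0) {s : ℂ} (hs : s ≠ 0) :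
    averageKernel u h s = averageKernelNumer u h s / s ^ 2 := by
  rw [averageKernel, dslope_of_ne _ hs, slope_def_field, dslope_of_ne _ hs, slope_def_field,
    dslope_same, averageKernelNumer_zero, (hasDerivAt_averageKernelNumer_zero hh).deriv]
  simp only [sub_zero]
  field_simp

lemma averageKernel_conj (hh : h ≠ 0) {s : ℂ} (hs : s ≠ 0) :
    averageKernel u h (conj s) = conj (averageKernel u h s) := by
  rw [averageKernel_eq_div_sq hh hs, averageKernel_eq_div_sq hh ((map_ne_zero _).2 hs), map_div₀,
    map_pow]
  simp [averageKernelNumer, ← exp_conj]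

lemma norm_averageKernelNumer_le (hu : 0 ≤ u) (hh : 0 < h) {b : ℝ} {s : ℂ} (hs : s.re ≤ b) :
    ‖averageKernelNumer u h s‖ ≤
      (Real.exp ((u + h) * b) + Real.exp (u * b)) / h + (Real.exp b + 1) := by
  refine (norm_sub_le _ _).trans (add_le_add ?_ ((norm_sub_le _ _).trans ?_))
  · rw [norm_div, norm_real, Real.norm_of_nonneg hh.le, ← ofReal_add]
    refine div_le_div_of_nonneg_right ((norm_sub_le _ _).trans ?_) hh.le
    rw [norm_exp, norm_exp, re_ofReal_mul, re_ofReal_mul]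
    gcongr
  · rw [norm_exp, norm_one]
    gcongr

lemma exists_norm_averageKernel_le (hu : 0 ≤ u) (hh : 0 < h) (b : ℝ) :
    ∃ M : ℝ, 0 ≤ M ∧ ∀ w : ℂ, w.re ≤ b → ‖averageKernel u h w‖ ≤ M / (1 + ‖w‖) ^ 2 := by
  obtain ⟨M₁, hM₁⟩ := (isCompact_closedBall (0:ℂ) 1).exists_bound_of_continuousOn
    (differentiable_averageKernel (u := u) (h := h)).continuous.continuousOn
  have hM₁_nonneg : 0 ≤ M₁ := (norm_nonneg _).trans (hM₁ 0 (by simp))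
  set M₂ := (Real.exp ((u + h) * b) + Real.exp (u * b)) / h + (Real.exp b + 1)
  have hM₂_nonneg : 0 ≤ M₂ := by positivity
  refine ⟨4 * (M₁ + M₂), by positivity, fun w hw => ?_⟩
  rw [le_div_iff₀ (by positivity)]
  rcases le_or_gt ‖w‖ 1 with hsmall | hlarge
  · calc ‖averageKernel u h w‖ * (1 + ‖w‖) ^ 2 ≤ M₁ * (1 + 1) ^ 2 := by
          gcongr
          exact hM₁ w (by simpa using hsmall)
      _ ≤ 4 * (M₁ + M₂) := by linarith
  · have hw0 : w ≠ 0 := norm_pos_iff.1 (by linarith)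
    rw [averageKernel_eq_div_sq hh.ne' hw0, norm_div, norm_pow, div_mul_eq_mul_div,
      div_le_iff₀ (by positivity)]
    calc ‖averageKernelNumer u h w‖ * (1 + ‖w‖) ^ 2 ≤ M₂ * (2 * ‖w‖) ^ 2 := by
          gcongr
          · exact norm_averageKernelNumer_le hu hh hw
          · linarith
      _ = 4 * M₂ * ‖w‖ ^ 2 := by ring
      _ ≤ 4 * (M₁ + M₂) * ‖w‖ ^ 2 := by
        gcongr
        linarith

lemma log_add_two_le_four_mul_sqrt {x : ℝ} (hx : 0 ≤ x) :
    Real.log (x + 2) ≤ 4 * √(1 + x) := by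
  have hlog := Real.log_le_rpow_div (x := x + 2) (by positivity) (by norm_num : (0:ℝ) < 1 / 2)
  rw [← Real.sqrt_eq_rpow] at hlog
  have hsqrt : √(x + 2) ≤ 2 * √(1 + x) := by
    rw [Real.sqrt_le_left (by positivity), mul_pow, Real.sq_sqrt (by positivity)]
    linarith
  linarith

lemma exists_norm_psiErrorTransform_le_mul_sqrt (hRH : RiemannHypothesis) {σ : ℝ}
    (hσ : 1 / 2 < σ) : ∃ M : ℝ, 0 ≤ M ∧ ∀ s : ℂ, σ ≤ s.re →
      ‖psiErrorTransform s‖ ≤ M * √(1 + |s.im|) := by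
  obtain ⟨c₁, hc₁, hright⟩ := exists_norm_psiErrorTransform_le (σ := 3 / 2) (by norm_num)
  obtain ⟨c₂, hc₂, hstrip⟩ := exists_norm_psiErrorTransform_le_div hRH
  have : 0 < σ - 1 / 2 := by linarith
  refine ⟨c₁ + c₂ * 4 / (σ - 1 / 2), by positivity, fun s hs => ?_⟩
  rw [add_mul]
  rcases le_or_gt s.re (3 / 2) with hs' | hs'
  · calc ‖psiErrorTransform s‖ ≤ c₂ * Real.log (|s.im| + 2) / (s.re - 1 / 2) :=
          hstrip s (by linarith) hs'
      _ ≤ c₂ * (4 * √(1 + |s.im|)) / (σ - 1 / 2) := by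
        gcongr
        exact log_add_two_le_four_mul_sqrt (abs_nonneg _)
      _ = c₂ * 4 / (σ - 1 / 2) * √(1 + |s.im|) := by ring
      _ ≤ _ := le_add_of_nonneg_left (by positivity)
  · calc ‖psiErrorTransform s‖ ≤ c₁ := hright s hs'.le
      _ ≤ c₁ * √(1 + |s.im|) :=
        le_mul_of_one_le_right hc₁ (Real.one_le_sqrt.2 (by linarith [abs_nonneg s.im]))
      _ ≤ _ := le_add_of_nonneg_right (by positivity)

lemma exists_norm_psiErrorTransform_mul_averageKernel_le (hRH : RiemannHypothesis) (hu : 0 ≤ u)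
    (hh : 0 < h) {σ : ℝ} (hσ : 1 / 2 < σ) (b : ℝ) : ∃ M : ℝ, ∀ (s w : ℂ) (y : ℝ), σ ≤ s.re →
      w.re ≤ b → |s.im| ≤ y → y ≤ ‖w‖ →
      ‖psiErrorTransform s * averageKernel u h w‖ ≤ M * (1 + y) ^ (-(3 / 2) : ℝ) := by
  obtain ⟨M₁, hM₁, htransform⟩ := exists_norm_psiErrorTransform_le_mul_sqrt hRH hσ
  obtain ⟨M₂, hM₂, hkernel⟩ := exists_norm_averageKernel_le hu hh b
  refine ⟨M₁ * M₂, fun s w y hs hw hsy hyw => ?_⟩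
  have hy : 0 ≤ y := (abs_nonneg _).trans hsy
  have hpow : √(1 + y) / (1 + y) ^ 2 = (1 + y) ^ (-(3 / 2) : ℝ) := by
    rw [Real.sqrt_eq_rpow, ← Real.rpow_natCast, ← Real.rpow_sub (by positivity)]
    norm_num
  calc ‖psiErrorTransform s * averageKernel u h w‖
      ≤ (M₁ * √(1 + |s.im|)) * (M₂ / (1 + ‖w‖) ^ 2) := by
        rw [norm_mul]
        gcongr
        · exact htransform s hs
        · exact hkernel w hw
    _ ≤ (M₁ * √(1 + y)) * (M₂ / (1 + y) ^ 2) := by gcongr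
    _ = M₁ * M₂ * (1 + y) ^ (-(3 / 2) : ℝ) := by
        rw [← hpow]
        ring

section VerticalLine

variable {σ : ℝ}

lemma integral_psiErrorTransform_mul_averageKernel_shift (hRH : RiemannHypothesis) (hu : 0 ≤ u)
    (hh : 0 < h) (hσ : 1 / 2 < σ) {b : ℝ} (hb : σ ≤ b) :
    ∫ t : ℝ, psiErrorTransform (σ + t * I) * averageKernel u h (σ + t * I) =
      ∫ t : ℝ, psiErrorTransform (b + t * I) * averageKernel u h (b + t * I) := by
  obtain ⟨M, hM⟩ := exists_norm_psiErrorTransform_mul_averageKernel_le hRH hu hh hσ b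
  exact integral_verticalLine_eq (F := fun s => psiErrorTransform s * averageKernel u h s) hb
    (by norm_num : (1:ℝ) < 3 / 2)
    (fun s hs _ => (differentiableAt_psiErrorTransform hRH (by linarith)).mul
      (differentiable_averageKernel s))
    fun s hs hs' => hM s s _ hs hs' le_rfl (abs_im_le_norm s)

lemma integrable_psiErrorTransform_mul_averageKernel (hRH : RiemannHypothesis) (hu : 0 ≤ u)
    (hh : 0 < h) (hσ : 1 / 2 < σ) :
    Integrable fun t : ℝ => psiErrorTransform (σ + t * I) * averageKernel u h (σ + t * I) := by
  obtain ⟨M, hM⟩ := exists_norm_psiErrorTransform_mul_averageKernel_le hRH hu hh hσ σ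
  refine integrable_verticalLine (F := fun s => psiErrorTransform s * averageKernel u h s)
    (by norm_num : (1:ℝ) < 3 / 2)
    (fun t => ((differentiableAt_psiErrorTransform hRH (by simpa using hσ)).mul
      (differentiable_averageKernel _)).continuousAt)
    fun t => hM _ _ |t| (by simp) (by simp) (by simp) ?_
  simpa using abs_im_le_norm (σ + t * I)

lemma integrable_psiErrorTransform_mul_averageKernel_reflected (hRH : RiemannHypothesis)
    (hu : 0 ≤ u) (hh : 0 < h) (hσ : 1 / 2 < σ) : Integrable fun t : ℝ =>
      psiErrorTransform (σ + t * I) * averageKernel u h (2 * σ - (σ + t * I)) := by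
  obtain ⟨M, hM⟩ := exists_norm_psiErrorTransform_mul_averageKernel_le hRH hu hh hσ σ
  refine integrable_verticalLine
    (F := fun s => psiErrorTransform s * averageKernel u h (2 * σ - s))
    (by norm_num : (1:ℝ) < 3 / 2)
    (fun t => ((differentiableAt_psiErrorTransform hRH (by simpa using hσ)).mul
      (differentiable_averageKernel.comp (by fun_prop) _)).continuousAt)
    fun t => hM _ _ |t| (by simp) (by simp [two_mul]) (by simp) ?_
  simpa using abs_im_le_norm (2 * σ - (σ + t * I))

-- The reflected kernel decays to the right, so the contour can be pushed off to `Re s = ∞`.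
lemma integral_psiErrorTransform_mul_averageKernel_reflected (hRH : RiemannHypothesis)
    (hu : 0 ≤ u) (hh : 0 < h) (hσ : 1 / 2 < σ) :
    ∫ t : ℝ, psiErrorTransform (σ + t * I) * averageKernel u h (2 * σ - (σ + t * I)) = 0 := by
  obtain ⟨M, hM⟩ := exists_norm_psiErrorTransform_mul_averageKernel_le hRH hu hh hσ σ
  refine integral_verticalLine_eq_zero (a := σ) (p := 2 * σ) (M := M)
    (F := fun s => psiErrorTransform s * averageKernel u h (2 * σ - s))
    (by norm_num : (1:ℝ) < 3 / 2)
    (fun s hs => (differentiableAt_psiErrorTransform hRH (by linarith)).mul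
      (differentiable_averageKernel.comp (by fun_prop) _)) fun s hs => ?_
  refine hM s _ _ hs ?_ (by simpa using abs_im_le_norm (s - (2 * σ : ℝ))) ?_
  · simp only [sub_re, mul_re, re_ofNat, ofReal_re, im_ofNat, ofReal_im]
    linarith
  · rw [norm_sub_rev, ofReal_mul, ofReal_ofNat]

lemma re_integral_psiErrorTransform_mul_averageKernel (hRH : RiemannHypothesis) (hu : 0 ≤ u)
    (hh : 0 < h) (hσ : 1 / 2 < σ) {b : ℝ} (hb : σ ≤ b) :
    (∫ t : ℝ, psiErrorTransform (b + t * I) * averageKernel u h (b + t * I)).re =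
      2 * ∫ t : ℝ, (psiErrorTransform (σ + t * I)).re * (averageKernel u h (σ + t * I)).re := by
  have hint := integrable_psiErrorTransform_mul_averageKernel hRH hu hh hσ
  have hint' := integrable_psiErrorTransform_mul_averageKernel_reflected hRH hu hh hσ
  have hsum (t : ℝ) : (psiErrorTransform (σ + t * I) * averageKernel u h (σ + t * I) +
      psiErrorTransform (σ + t * I) * averageKernel u h (2 * σ - (σ + t * I))).re =
      2 * ((psiErrorTransform (σ + t * I)).re * (averageKernel u h (σ + t * I)).re) := by
    have hconj : (2 * σ - (σ + t * I) : ℂ) = conj (σ + t * I : ℂ) := by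
      simp only [map_add, map_mul, conj_ofReal, conj_I]
      ring
    have hne : (σ + t * I : ℂ) ≠ 0 := fun h0 => by
      have hre := congrArg re h0
      simp only [add_re, ofReal_re, mul_re, I_re, ofReal_im, I_im, zero_re] at hre
      linarith
    rw [hconj, averageKernel_conj hh.ne' hne, ← mul_add, add_conj, re_mul_ofReal]
    ring
  rw [← integral_psiErrorTransform_mul_averageKernel_shift hRH hu hh hσ hb, ← add_zero (∫ _, _),
    ← integral_psiErrorTransform_mul_averageKernel_reflected hRH hu hh hσ,
    ← integral_add hint hint', ← integral_const_mul]
  exact (integral_re (hint.add hint')).symm.trans (integral_congr_ae (.of_forall hsum))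

end VerticalLine

end AverageKernel

/-! ### Mellin inversion for the integrated error of `ψ` -/

section Inversion

open Complex Set MeasureTheory Filter

section TailMellin

variable {f : ℝ → ℂ} {b x : ℝ}

lemma eq_integral_cpow_mul_tailMellin (hf : ∀ t ≤ 1, f t = 0) (hx : 0 < x)
    (hint : IntegrableOn (fun t : ℝ => f t * (t:ℂ) ^ (-((b:ℂ) + 1))) (Ioi 1))
    (hvert : Integrable fun t : ℝ => tailMellin f (b + t * I)) (hcont : ContinuousAt f x) :
    f x = 1 / (2 * Real.pi) * ∫ t : ℝ, (x:ℂ) ^ (b + t * I) * tailMellin f (b + t * I) := by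
  have hmellin (t : ℝ) : mellin f ((-b : ℝ) + (-t : ℝ) * I) = tailMellin f (b + t * I) := by
    have hsupp : (Ioi (1:ℝ)).indicator f = f := indicator_eq_self.2 fun t ht =>
      not_le.1 fun h => ht (hf t h)
    rw [tailMellin_eq_mellin, hsupp]
    congr 1
    push_cast
    ring
  have hconv : MellinConvergent f (-b : ℝ) := by
    refine IntegrableOn.of_forall_sdiff_eq_zero (hint.congr_fun (fun t _ => ?_) measurableSet_Ioi)
      measurableSet_Ioi fun t ht => by simp [hf t (not_lt.1 ht.2)]
    change f t * (t:ℂ) ^ (-((b:ℂ) + 1)) = (t:ℂ) ^ (((-b : ℝ) : ℂ) - 1) * f t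
    rw [mul_comm, neg_add', ofReal_neg]
  have hvert' : VerticalIntegrable (mellin f) (-b) := by
    refine hvert.comp_neg.congr (Eventually.of_forall fun t => ?_)
    simpa using (hmellin (-t)).symm
  rw [← mellinInv_mellin_eq (-b) f hx hconv hvert' hcont, mellinInv, real_smul,
    ← integral_neg_eq_self]
  congr 1
  · push_cast
    rfl
  · congr 1 with t
    rw [hmellin, smul_eq_mul]
    congr 2
    push_cast
    ring

end TailMellin

section Primitive

variable {e : ℝ → ℂ} {C a : ℝ} {s : ℂ}

lemma integrable_prod_indicator_mul_cpow (he : AEStronglyMeasurable e (volume.restrict (Ioi 1)))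
    (hb : ∀ t > 1, ‖e t‖ ≤ C * t ^ a) (ha : 0 ≤ a) (hs : a < s.re) :
    Integrable ({p : ℝ × ℝ | p.1 ≤ p.2}.indicator fun p => e p.1 / p.1 * (p.2:ℂ) ^ (-(s + 1)))
      ((volume.restrict (Ioi 1)).prod (volume.restrict (Ioi 1))) := by
  obtain ⟨ε, hε, hre⟩ : ∃ ε > 0, s.re = a + 2 * ε :=
    ⟨(s.re - a) / 2, half_pos (sub_pos.2 hs), by ring⟩
  have hpow : IntegrableOn (fun t : ℝ => t ^ (-ε - 1)) (Ioi 1) :=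
    integrableOn_Ioi_rpow_of_lt (by linarith) zero_lt_one
  refine ((hpow.mul_prod hpow).const_mul C).mono' ?_ ?_
  · refine AEStronglyMeasurable.indicator ?_ (measurableSet_le measurable_fst measurable_snd)
    simp only [div_eq_mul_inv, mul_assoc]
    exact he.comp_fst.mul (by fun_prop :
      Measurable fun p : ℝ × ℝ => (p.1:ℂ)⁻¹ * (p.2:ℂ) ^ (-(s + 1))).aestronglyMeasurable
  rw [Measure.prod_restrict]
  filter_upwards [ae_restrict_mem (measurableSet_Ioi.prod measurableSet_Ioi)]
  rintro ⟨t, y⟩ ⟨ht : 1 < t, hy : 1 < y⟩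
  have ht0 : 0 < t := by linarith
  have hy0 : 0 < y := by linarith
  have hC : 0 ≤ C := nonneg_of_mul_nonneg_left ((norm_nonneg _).trans (hb t ht)) (by positivity)
  rw [indicator_apply]
  split_ifs with hty
  swap
  · rw [norm_zero]
    positivity
  replace hty : t ≤ y := hty
  calc ‖e t / t * (y:ℂ) ^ (-(s + 1))‖ ≤ C * t ^ a / t * y ^ (-(s.re + 1)) := by
        rw [norm_mul, norm_div, norm_real, Real.norm_of_nonneg ht0.le,
          norm_cpow_eq_rpow_re_of_pos hy0, neg_re, add_re, one_re]
        gcongr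
        exact hb t ht
    _ = C * (t ^ (a - 1) * (y ^ (-ε - 1) * y ^ (-ε - a))) := by
        rw [← Real.rpow_add hy0, Real.rpow_sub_one ht0.ne', mul_div_assoc, mul_assoc, hre]
        congr 3
        ring
    _ ≤ C * (t ^ (a - 1) * (y ^ (-ε - 1) * t ^ (-ε - a))) := by
        gcongr C * (_ * (_ * ?_))
        exact Real.rpow_le_rpow_of_nonpos ht0 hty (by linarith)
    _ = C * (t ^ (-ε - 1) * y ^ (-ε - 1)) := by
        rw [mul_left_comm (t ^ _), ← Real.rpow_add ht0, mul_comm (y ^ _)]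
        congr 3
        ring

lemma tailMellin_primitive (he : AEStronglyMeasurable e (volume.restrict (Ioi 1)))
    (hb : ∀ t > 1, ‖e t‖ ≤ C * t ^ a) (ha : 0 ≤ a) (hs : a < s.re) :
    tailMellin (fun y => ∫ t in Ioc 1 y, e t / t) s = tailMellin e s / s := by
  have hs0 : s ≠ 0 := by
    rintro rfl
    exact (hs.trans_le ha).false
  have houter (y : ℝ) : ∫ t in Ioi 1, {p : ℝ × ℝ | p.1 ≤ p.2}.indicator
      (fun p => e p.1 / p.1 * (p.2:ℂ) ^ (-(s + 1))) (t, y) =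
      (∫ t in Ioc 1 y, e t / t) * (y:ℂ) ^ (-(s + 1)) := by
    rw [← integral_mul_const, ← Ioi_inter_Iic, ← setIntegral_indicator measurableSet_Iic]
    rfl
  have hinner : ∀ t ∈ Ioi (1:ℝ), ∫ y in Ioi 1, {p : ℝ × ℝ | p.1 ≤ p.2}.indicator
      (fun p => e p.1 / p.1 * (p.2:ℂ) ^ (-(s + 1))) (t, y) =
      e t * (t:ℂ) ^ (-(s + 1)) / s := fun t (ht : 1 < t) => by
    have ht0 : 0 < t := by linarith
    have ht0' : (t:ℂ) ≠ 0 := ofReal_ne_zero.2 ht0.ne'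
    calc _ = ∫ y in Ioi 1 ∩ Ici t, e t / t * (y:ℂ) ^ (-(s + 1)) := by
          rw [← setIntegral_indicator measurableSet_Ici]
          rfl
      _ = e t / t * (-(t:ℂ) ^ (-(s + 1) + 1) / (-(s + 1) + 1)) := by
          rw [inter_eq_self_of_subset_right (Ici_subset_Ioi.2 ht), integral_Ici_eq_integral_Ioi,
            integral_const_mul, integral_Ioi_cpow_of_lt (by simp; linarith) ht0]
      _ = e t * (t:ℂ) ^ (-(s + 1)) / s := by
          rw [cpow_add _ _ ht0', cpow_one, neg_add_rev, neg_add_cancel_comm]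
          field_simp
  have hswap := integral_integral_swap (f := Function.curry <| {p : ℝ × ℝ | p.1 ≤ p.2}.indicator
    fun p => e p.1 / p.1 * (p.2:ℂ) ^ (-(s + 1)))
    (integrable_prod_indicator_mul_cpow he hb ha hs)
  simp only [Function.curry_apply] at hswap
  rw [tailMellin, tailMellin, ← integral_div, ← setIntegral_congr_fun measurableSet_Ioi hinner,
    hswap]
  simp only [houter]

end Primitive

/-- The primitive `∫₁ˣ (ψ(t) - t) dt/t`, extended by `0` to `x ≤ 1`. -/
noncomputable def psiErrorPrimitive (x : ℝ) : ℝ :=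
  ∫ t in Ioc 1 x, (Chebyshev.psi t - t) / t

lemma psiErrorPrimitive_of_le_one {x : ℝ} (hx : x ≤ 1) : psiErrorPrimitive x = 0 := by
  simp [psiErrorPrimitive, Ioc_eq_empty (not_lt.2 hx)]

lemma abs_psi_sub_self_div_le (t : ℝ) : |(Chebyshev.psi t - t) / t| ≤ 8 := by
  rcases lt_or_ge t 1 with ht | ht
  · rw [Chebyshev.psi_eq_zero_of_le_one ht.le, zero_sub, neg_div, abs_neg, abs_div]
    exact (div_self_le_one |t|).trans (by norm_num)
  · rw [abs_div, abs_of_pos (by linarith : 0 < t), div_le_iff₀ (by linarith)]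
    exact abs_psi_sub_self_le (by linarith)

lemma intervalIntegrable_psi_sub_self_div (a b : ℝ) :
    IntervalIntegrable (fun t => (Chebyshev.psi t - t) / t) volume a b := by
  have hmeas : Measurable fun t => (Chebyshev.psi t - t) / t :=
    (Chebyshev.psi_mono.measurable.sub measurable_id).div measurable_id
  exact (intervalIntegrable_const (c := 8)).mono_fun' hmeas.aestronglyMeasurable
    (Eventually.of_forall abs_psi_sub_self_div_le)

lemma psiErrorPrimitive_of_one_le {x : ℝ} (hx : 1 ≤ x) :
    psiErrorPrimitive x = ∫ t in (1:ℝ)..x, (Chebyshev.psi t - t) / t := by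
  rw [psiErrorPrimitive, intervalIntegral.integral_of_le hx]

lemma continuous_psiErrorPrimitive : Continuous psiErrorPrimitive := by
  have heq : psiErrorPrimitive = fun x => ∫ t in (1:ℝ)..(max 1 x), (Chebyshev.psi t - t) / t := by
    ext x
    rcases le_total x 1 with hx | hx
    · rw [psiErrorPrimitive_of_le_one hx, max_eq_left hx, intervalIntegral.integral_same]
    · rw [psiErrorPrimitive_of_one_le hx, max_eq_right hx]
  rw [heq]
  exact (intervalIntegral.continuous_primitive intervalIntegrable_psi_sub_self_div 1).comp
    (continuous_const.max continuous_id)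

lemma norm_psiErrorPrimitive_le {x : ℝ} (hx : 1 < x) :
    ‖(psiErrorPrimitive x : ℂ)‖ ≤ 8 * x ^ (1:ℝ) := by
  rw [norm_real, psiErrorPrimitive_of_one_le hx.le, Real.rpow_one]
  refine (intervalIntegral.norm_integral_le_of_norm_le_const fun t _ =>
    abs_psi_sub_self_div_le t).trans ?_
  rw [abs_of_pos (by linarith)]
  linarith

lemma tailMellin_psiErrorPrimitive {s : ℂ} (hs : 1 < s.re) :
    tailMellin (fun x => (psiErrorPrimitive x : ℂ)) s = psiErrorTransform s / s ^ 2 := by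
  have hs0 : s ≠ 0 := by
    rintro rfl
    exact (hs.trans zero_lt_one).false
  have hprimitive (x : ℝ) : (psiErrorPrimitive x : ℂ) =
      ∫ t in Ioc 1 x, ((Chebyshev.psi t - t : ℝ) : ℂ) / t := by
    rw [psiErrorPrimitive, ← integral_complex_ofReal]
    push_cast
    rfl
  simp only [hprimitive]
  rw [tailMellin_primitive (C := 8) (a := 1) aestronglyMeasurable_psi_sub_self
      (fun t ht => ?_) zero_le_one hs,
    psiErrorTransform_eq_mul_tailMellin hs]
  · field_simp
  · rw [norm_real, Real.rpow_one]
    exact abs_psi_sub_self_le (zero_le_one.trans ht.le)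

section VerticalLine

variable {b : ℝ}

lemma integrable_tailMellin_psiErrorPrimitive (hb : 1 < b) : Integrable fun t : ℝ =>
    tailMellin (fun x => (psiErrorPrimitive x : ℂ)) (b + t * I) := by
  obtain ⟨C, hC, hbound⟩ := exists_norm_psiErrorTransform_le hb
  refine integrable_verticalLine (M := C * 4) one_lt_two (fun t => ?_) fun t => ?_
  · exact (differentiableAt_tailMellin (C := 8) (a := 1)
      (continuous_ofReal.comp continuous_psiErrorPrimitive).aestronglyMeasurable
      (fun t => norm_psiErrorPrimitive_le) (by simpa using hb)).continuousAt
  · have hnorm : (1 + |t|) / 2 ≤ ‖(b + t * I : ℂ)‖ := by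
      have hre := re_le_norm (b + t * I)
      have him := abs_im_le_norm (b + t * I)
      simp only [add_re, ofReal_re, mul_re, I_re, ofReal_im, I_im, add_im, mul_im] at hre him
      ring_nf at hre him ⊢
      linarith
    rw [tailMellin_psiErrorPrimitive (by simpa using hb), norm_div, norm_pow]
    calc _ ≤ C / ((1 + |t|) / 2) ^ 2 := by
          gcongr
          exact hbound _ (by simp)
      _ = C * 4 * (1 + |t|) ^ (-2 : ℝ) := by
          rw [Real.rpow_neg (by positivity), Real.rpow_two]
          field_simp
          norm_num

lemma psiErrorPrimitive_exp_eq_integral (hb : 1 < b) (v : ℝ) :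
    (psiErrorPrimitive (Real.exp v) : ℂ) = 1 / (2 * Real.pi) * ∫ t : ℝ,
      exp (v * (b + t * I)) * tailMellin (fun x => (psiErrorPrimitive x : ℂ)) (b + t * I) := by
  have hint := integrableOn_mul_cpow (s := b) (a := 1)
    (continuous_ofReal.comp continuous_psiErrorPrimitive).aestronglyMeasurable
    (fun t => norm_psiErrorPrimitive_le) (by simpa using hb)
  rw [eq_integral_cpow_mul_tailMellin (f := fun x => (psiErrorPrimitive x : ℂ))
    (fun t ht => by rw [psiErrorPrimitive_of_le_one ht, ofReal_zero]) (Real.exp_pos v) hint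
    (integrable_tailMellin_psiErrorPrimitive hb)
    (continuous_ofReal.comp continuous_psiErrorPrimitive).continuousAt]
  congr 2 with t
  rw [cpow_def_of_ne_zero (ofReal_ne_zero.2 (Real.exp_pos v).ne'),
    ← ofReal_log (Real.exp_pos v).le, Real.log_exp]

lemma integrable_exp_mul_tailMellin_psiErrorPrimitive (hb : 1 < b) (v : ℝ) :
    Integrable fun t : ℝ =>
      exp (v * (b + t * I)) * tailMellin (fun x => (psiErrorPrimitive x : ℂ)) (b + t * I) := by
  refine (integrable_tailMellin_psiErrorPrimitive hb).bdd_mul (c := Real.exp (v * b)) (by fun_prop)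
    (Eventually.of_forall fun t => ?_)
  rw [norm_exp]
  simp

lemma psiErrorPrimitive_average_eq_integral (hb : 1 < b) (u : ℝ) {h : ℝ} (hh : h ≠ 0) :
    (((psiErrorPrimitive (Real.exp (u + h)) - psiErrorPrimitive (Real.exp u)) / h -
        psiErrorPrimitive (Real.exp 1) : ℝ) : ℂ) =
      1 / (2 * Real.pi) *
        ∫ t : ℝ, psiErrorTransform (b + t * I) * averageKernel u h (b + t * I) := by
  set g : ℝ → ℝ → ℂ := fun v t =>
    exp (v * (b + t * I)) * tailMellin (fun x => (psiErrorPrimitive x : ℂ)) (b + t * I)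
  have hint (v : ℝ) : Integrable (g v) := integrable_exp_mul_tailMellin_psiErrorPrimitive hb v
  have hsub (v w : ℝ) : Integrable fun t => g v t - g w t := (hint v).sub (hint w)
  have hg (v : ℝ) : (psiErrorPrimitive (Real.exp v) : ℂ) = 1 / (2 * Real.pi) * ∫ t, g v t :=
    psiErrorPrimitive_exp_eq_integral hb v
  have hkernel (t : ℝ) : psiErrorTransform (b + t * I) * averageKernel u h (b + t * I) =
      (g (u + h) t - g u t) / h - (g 1 t - g 0 t) := by
    have hre : 1 < (b + t * I : ℂ).re := by simpa using hb
    have hne : (b + t * I : ℂ) ≠ 0 := fun h0 => by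
      rw [h0, zero_re] at hre
      linarith
    simp only [g, tailMellin_psiErrorPrimitive hre, averageKernel_eq_div_sq hh hne,
      averageKernelNumer, ofReal_add, ofReal_one, ofReal_zero, one_mul, zero_mul, exp_zero]
    ring
  have hzero : (psiErrorPrimitive (Real.exp 0) : ℂ) = 0 := by
    rw [psiErrorPrimitive_of_le_one Real.exp_zero.le, ofReal_zero]
  simp only [hkernel]
  rw [integral_sub ((hsub _ _).div_const _) (hsub _ _), integral_div,
    integral_sub (hint _) (hint _), integral_sub (hint _) (hint _), mul_sub, mul_sub (1 / _),
    ← mul_div_assoc, mul_sub, ← hg, ← hg, ← hg, ← hg, hzero]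
  push_cast
  ring

end VerticalLine

end Inversion

/-! ### Size of the kernel on the line `Re s = 1 / 2 + 1 / u` -/

section KernelBound

open Complex

lemma sum_one_add_rpow_le {ε : ℝ} (hε : 0 < ε) (N : ℕ) :
    ∑ k ∈ Finset.range N, (1 + (k:ℝ)) ^ (-1 - ε) ≤ 1 + 1 / ε := by
  have hanti : AntitoneOn (fun x : ℝ => x ^ (-1 - ε)) (Set.Icc 1 (1 + N)) := fun x hx y _ hxy =>
    Real.rpow_le_rpow_of_nonpos (by linarith [hx.1]) hxy (by linarith)
  have hzero : (0:ℝ) ∉ Set.uIcc (1:ℝ) (1 + N) :=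
    Set.notMem_uIcc_of_lt one_pos (by positivity)
  calc ∑ k ∈ Finset.range N, (1 + (k:ℝ)) ^ (-1 - ε)
      ≤ ∑ k ∈ Finset.range (N + 1), (1 + (k:ℝ)) ^ (-1 - ε) :=
        Finset.sum_le_sum_of_subset_of_nonneg (Finset.range_mono N.le_succ)
          fun _ _ _ => by positivity
    _ = 1 + ∑ k ∈ Finset.range N, (1 + ((k + 1 : ℕ) : ℝ)) ^ (-1 - ε) := by
        rw [Finset.sum_range_succ', add_comm, Nat.cast_zero, add_zero, Real.one_rpow]
    _ ≤ 1 + ∫ x in (1:ℝ)..(1 + N), x ^ (-1 - ε) := by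
        gcongr
        exact hanti.sum_le_integral
    _ = 1 + (1 - (1 + (N:ℝ)) ^ (-ε)) / ε := by
        rw [integral_rpow (Or.inr ⟨by linarith, hzero⟩), Real.one_rpow, ← neg_div_neg_eq]
        ring_nf
    _ ≤ 1 + 1 / ε := by
        gcongr
        exact sub_le_self _ (by positivity)

lemma exp_three_halves_le : Real.exp (3 / 2) ≤ 9 :=
  calc Real.exp (3 / 2) ≤ Real.exp 1 ^ 2 := by
        rw [← Real.exp_nat_mul]
        gcongr
        norm_num
    _ ≤ 3 ^ 2 := by
        gcongr
        exact Real.exp_one_lt_three.le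
    _ = 9 := by norm_num

lemma norm_exp_sub_one_le_mul_rpow {z : ℂ} {δ : ℝ} (hδ₀ : 0 ≤ δ) (hδ₁ : δ ≤ 1)
    (hz : z.re ≤ 3 / 2) : ‖exp z - 1‖ ≤ 10 * ‖z‖ ^ (1 - δ) := by
  rcases le_or_gt ‖z‖ 1 with hsmall | hlarge
  · calc ‖exp z - 1‖ ≤ 2 * ‖z‖ := norm_exp_sub_one_le hsmall
      _ ≤ 10 * ‖z‖ := by linarith [norm_nonneg z]
      _ ≤ 10 * ‖z‖ ^ (1 - δ) := by
        gcongr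
        exact Real.self_le_rpow_of_le_one (norm_nonneg z) hsmall (by linarith)
  · calc ‖exp z - 1‖ ≤ Real.exp z.re + 1 := by
          simpa only [norm_exp, norm_one] using norm_sub_le (exp z) 1
      _ ≤ 9 + 1 := by
        gcongr
        exact (Real.exp_le_exp.2 hz).trans exp_three_halves_le
      _ = 10 * 1 := by norm_num
      _ ≤ 10 * ‖z‖ ^ (1 - δ) := by
        gcongr
        exact Real.one_le_rpow hlarge.le (by linarith)

variable {u : ℝ} {s : ℂ}

lemma norm_exp_mul_sub_one_div_le (hu : 1 ≤ u) (hs : s.re = 1 / 2 + 1 / u) :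
    ‖exp (Real.exp (-u / 2) * s) - 1‖ / Real.exp (-u / 2) ≤
      10 * (Real.exp (1 / 2) * ‖s‖ ^ (1 - 1 / u)) := by
  have hu0 : 0 < u := by linarith
  have hδ : 1 / u ≤ 1 := (div_le_one hu0).2 hu
  have hh : Real.exp (-u / 2) ≤ 1 := Real.exp_le_one_iff.2 (by linarith)
  have hre : ((Real.exp (-u / 2) : ℂ) * s).re ≤ 3 / 2 := by
    rw [re_ofReal_mul, hs]
    exact (mul_le_of_le_one_left (by positivity) hh).trans (by linarith)
  have hpow : Real.exp (-u / 2) ^ (1 - 1 / u) = Real.exp (-u / 2) * Real.exp (1 / 2) := by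
    rw [← Real.exp_mul, ← Real.exp_add]
    congr 1
    field_simp
    ring
  rw [div_le_iff₀ (Real.exp_pos _)]
  calc ‖exp (Real.exp (-u / 2) * s) - 1‖
      ≤ 10 * ‖(Real.exp (-u / 2) : ℂ) * s‖ ^ (1 - 1 / u) :=
        norm_exp_sub_one_le_mul_rpow (by positivity) hδ hre
    _ = 10 * (Real.exp (1 / 2) * ‖s‖ ^ (1 - 1 / u)) * Real.exp (-u / 2) := by
        rw [norm_mul, norm_real, Real.norm_of_nonneg (Real.exp_pos _).le,
          Real.mul_rpow (Real.exp_pos _).le (norm_nonneg s), hpow]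
        ring

lemma norm_averageKernelNumer_le_mul_rpow (hu : 1 ≤ u) (hs : s.re = 1 / 2 + 1 / u) :
    ‖averageKernelNumer u (Real.exp (-u / 2)) s‖ ≤
      100 * Real.exp (u / 2) * ‖s‖ ^ (1 - 1 / u) := by
  have hu0 : 0 < u := by linarith
  have hδ : 1 / u ≤ 1 := (div_le_one hu0).2 hu
  have hfactor : averageKernelNumer u (Real.exp (-u / 2)) s =
      exp (u * s) * ((exp (Real.exp (-u / 2) * s) - 1) / Real.exp (-u / 2)) - (exp s - 1) := by
    rw [averageKernelNumer, add_mul, exp_add]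
    ring
  have hexp : ‖exp (u * s)‖ = Real.exp (u / 2) * Real.exp 1 := by
    rw [norm_exp, ← Real.exp_add, re_ofReal_mul, hs]
    congr 1
    field_simp
  have hone : 1 ≤ Real.exp (u / 2) := Real.one_le_exp (by linarith)
  calc ‖averageKernelNumer u (Real.exp (-u / 2)) s‖
      ≤ ‖exp (u * s)‖ * (‖exp (Real.exp (-u / 2) * s) - 1‖ / Real.exp (-u / 2)) +
          ‖exp s - 1‖ := by
        rw [hfactor]
        refine (norm_sub_le _ _).trans_eq ?_
        rw [norm_mul, norm_div, norm_real, Real.norm_of_nonneg (Real.exp_pos _).le]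
    _ ≤ Real.exp (u / 2) * Real.exp 1 * (10 * (Real.exp (1 / 2) * ‖s‖ ^ (1 - 1 / u))) +
          10 * ‖s‖ ^ (1 - 1 / u) := by
        rw [hexp]
        gcongr
        · exact norm_exp_mul_sub_one_div_le hu hs
        · exact norm_exp_sub_one_le_mul_rpow (by positivity) hδ (by linarith)
    _ = 10 * Real.exp (u / 2) * ‖s‖ ^ (1 - 1 / u) * Real.exp (3 / 2) +
          10 * 1 * ‖s‖ ^ (1 - 1 / u) := by
        rw [show (3 / 2 : ℝ) = 1 + 1 / 2 by norm_num, Real.exp_add]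
        ring
    _ ≤ 10 * Real.exp (u / 2) * ‖s‖ ^ (1 - 1 / u) * 9 +
          10 * Real.exp (u / 2) * ‖s‖ ^ (1 - 1 / u) := by
        gcongr
        exact exp_three_halves_le
    _ = 100 * Real.exp (u / 2) * ‖s‖ ^ (1 - 1 / u) := by ring

lemma norm_rpow_neg_le {δ : ℝ} (hδ₀ : 0 ≤ δ) (hδ₁ : δ ≤ 1) (hs : 1 / 2 ≤ s.re) :
    ‖s‖ ^ (-1 - δ) ≤ 16 * (1 + |s.im|) ^ (-1 - δ) := by
  have hnorm : (1 + |s.im|) / 4 ≤ ‖s‖ := by linarith [re_le_norm s, abs_im_le_norm s]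
  calc ‖s‖ ^ (-1 - δ) ≤ ((1 + |s.im|) / 4) ^ (-1 - δ) :=
        Real.rpow_le_rpow_of_nonpos (by positivity) hnorm (by linarith)
    _ = 4 ^ (1 + δ) * (1 + |s.im|) ^ (-1 - δ) := by
        rw [Real.div_rpow (by positivity) (by norm_num), ← neg_add', Real.rpow_neg zero_le_four,
          div_inv_eq_mul, mul_comm]
    _ ≤ 4 ^ (2:ℝ) * (1 + |s.im|) ^ (-1 - δ) := by
        gcongr
        · norm_num
        · linarith
    _ = 16 * (1 + |s.im|) ^ (-1 - δ) := by norm_num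

lemma norm_averageKernel_le_mul_rpow (hu : 1 ≤ u) (hs : s.re = 1 / 2 + 1 / u) :
    ‖averageKernel u (Real.exp (-u / 2)) s‖ ≤
      1600 * Real.exp (u / 2) * (1 + |s.im|) ^ (-1 - 1 / u) := by
  have hu0 : 0 < u := by linarith
  have hδ₀ : 0 < 1 / u := by positivity
  have hδ₁ : 1 / u ≤ 1 := (div_le_one hu0).2 hu
  have hnorm : 0 < ‖s‖ := by linarith [re_le_norm s]
  have hpow : ‖s‖ ^ (1 - 1 / u) / ‖s‖ ^ 2 = ‖s‖ ^ (-1 - 1 / u) := by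
    rw [← Real.rpow_natCast, ← Real.rpow_sub hnorm]
    congr 1
    push_cast
    ring
  calc ‖averageKernel u (Real.exp (-u / 2)) s‖
      ≤ 100 * Real.exp (u / 2) * ‖s‖ ^ (1 - 1 / u) / ‖s‖ ^ 2 := by
        rw [averageKernel_eq_div_sq (Real.exp_pos _).ne' (norm_pos_iff.1 hnorm), norm_div, norm_pow]
        gcongr
        exact norm_averageKernelNumer_le_mul_rpow hu hs
    _ = 100 * Real.exp (u / 2) * ‖s‖ ^ (-1 - 1 / u) := by rw [mul_div_assoc, hpow]
    _ ≤ 100 * Real.exp (u / 2) * (16 * (1 + |s.im|) ^ (-1 - 1 / u)) := by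
        gcongr
        exact norm_rpow_neg_le hδ₀.le hδ₁ (by linarith)
    _ = 1600 * Real.exp (u / 2) * (1 + |s.im|) ^ (-1 - 1 / u) := by ring

end KernelBound

/-! ### The bound for `ψ` under the Riemann hypothesis -/

section PsiBound

open Complex Set MeasureTheory Filter Topology

lemma integral_le_two_mul_of_unitInterval_le {f : ℝ → ℝ} (hf : Integrable f) {B : ℕ → ℝ} {S : ℝ}
    (hright : ∀ k : ℕ, ∫ t in (k:ℝ)..(k + 1), f t ≤ B k)
    (hleft : ∀ k : ℕ, ∫ t in (-(k + 1) : ℝ)..(-k), f t ≤ B k)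
    (hB : ∀ N : ℕ, ∑ k ∈ Finset.range N, B k ≤ S) : ∫ t, f t ≤ 2 * S := by
  have hint (a b : ℝ) : IntervalIntegrable f volume a b := hf.intervalIntegrable
  have hfinite (N : ℕ) : ∫ t in (-N : ℝ)..N, f t ≤ 2 * ∑ k ∈ Finset.range N, B k := by
    induction N with
    | zero => simp
    | succ N ih =>
      have hsplit : ∫ t in (-(N + 1) : ℝ)..(N + 1), f t = (∫ t in (-(N + 1) : ℝ)..(-N), f t) +
          (∫ t in (-N : ℝ)..N, f t) + ∫ t in (N:ℝ)..(N + 1), f t := by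
        rw [intervalIntegral.integral_add_adjacent_intervals (hint _ _) (hint _ _),
          intervalIntegral.integral_add_adjacent_intervals (hint _ _) (hint _ _)]
      rw [Finset.sum_range_succ, Nat.cast_succ, hsplit]
      linarith [hright N, hleft N]
  refine le_of_tendsto (intervalIntegral_tendsto_integral hf
    (tendsto_neg_atTop_atBot.comp tendsto_natCast_atTop_atTop) tendsto_natCast_atTop_atTop)
    (Eventually.of_forall fun N : ℕ => (hfinite N).trans ?_)
  gcongr
  exact hB N

lemma log_add_two_le_mul_rpow {u x y : ℝ} (hu : 1 ≤ u) (hx : 0 ≤ x) (hy : 0 ≤ y)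
    (hxy : x ≤ y + 1) : Real.log (x + 2) ≤ 6 * u * (1 + y) ^ (1 / (2 * u)) := by
  have : 0 < u := by linarith
  calc Real.log (x + 2) ≤ (x + 2) ^ (1 / (2 * u)) / (1 / (2 * u)) :=
        Real.log_le_rpow_div (by positivity) (by positivity)
    _ = 2 * u * (x + 2) ^ (1 / (2 * u)) := by
        field_simp
    _ ≤ 2 * u * (3 * (1 + y)) ^ (1 / (2 * u)) := by
        gcongr
        linarith
    _ ≤ 2 * u * (3 * (1 + y) ^ (1 / (2 * u))) := by
        rw [Real.mul_rpow (by norm_num) (by positivity)]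
        gcongr
        refine Real.rpow_le_self_of_one_le (by norm_num) ((div_le_one (by positivity)).2 ?_)
        linarith
    _ = 6 * u * (1 + y) ^ (1 / (2 * u)) := by ring

lemma continuous_re_mul_re (hRH : RiemannHypothesis) {σ : ℝ} (hσ : 1 / 2 < σ) (u h : ℝ) :
    Continuous fun t : ℝ =>
      (psiErrorTransform (σ + t * I)).re * (averageKernel u h (σ + t * I)).re :=
  (continuous_re.comp (continuous_psiErrorTransform_verticalLine hRH hσ)).mul
    (continuous_re.comp (differentiable_averageKernel.continuous.comp (by fun_prop)))

lemma exists_integral_unitInterval_le (hRH : RiemannHypothesis) : ∃ c > 0, ∀ u : ℝ, 1 ≤ u →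
    ∀ (k : ℕ) (a : ℝ), |a| ≤ k + 1 → (∀ t ∈ Icc a (a + 1), (k:ℝ) ≤ |t|) →
    ∫ t in a..(a + 1), |(psiErrorTransform ((1 / 2 + 1 / u : ℝ) + t * I)).re *
        (averageKernel u (Real.exp (-u / 2)) ((1 / 2 + 1 / u : ℝ) + t * I)).re| ≤
      c * Real.exp (u / 2) * u * (1 + (k:ℝ)) ^ (-1 - 1 / (2 * u)) := by
  obtain ⟨c, hc, htransform⟩ := exists_integral_abs_re_psiErrorTransform_le hRH
  refine ⟨1600 * c * 6, by positivity, fun u hu k a ha hk => ?_⟩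
  have hδ₀ : 0 < 1 / u := by positivity
  have hδ₁ : 1 / u ≤ 1 := (div_le_one (by linarith)).2 hu
  set σ : ℝ := 1 / 2 + 1 / u with hσ
  set B : ℝ := 1600 * Real.exp (u / 2) * (1 + (k:ℝ)) ^ (-1 - 1 / u) with hB
  have hkernel : ∀ t ∈ Icc a (a + 1), |(psiErrorTransform (σ + t * I)).re *
      (averageKernel u (Real.exp (-u / 2)) (σ + t * I)).re| ≤
      B * |(psiErrorTransform (σ + t * I)).re| := fun t ht => by
    rw [abs_mul, mul_comm]
    gcongr
    refine (abs_re_le_norm _).trans ((norm_averageKernel_le_mul_rpow hu (by simp [hσ])).trans ?_)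
    rw [hB]
    gcongr 1600 * Real.exp (u / 2) * ?_
    refine Real.rpow_le_rpow_of_nonpos (by positivity) ?_ (by linarith)
    simpa using hk t ht
  calc _ ≤ ∫ t in a..(a + 1), B * |(psiErrorTransform (σ + t * I)).re| :=
        intervalIntegral.integral_mono_on (by linarith)
          ((continuous_re_mul_re hRH (by linarith) _ _).abs.intervalIntegrable _ _)
          (((continuous_re.comp (continuous_psiErrorTransform_verticalLine hRH
            (by linarith))).abs.const_mul B).intervalIntegrable _ _) hkernel
    _ ≤ B * (c * Real.log (|a| + 2)) := by
        rw [intervalIntegral.integral_const_mul]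
        gcongr
        exact htransform σ a (by linarith) (by linarith)
    _ ≤ B * (c * (6 * u * (1 + (k:ℝ)) ^ (1 / (2 * u)))) := by
        gcongr
        exact log_add_two_le_mul_rpow hu (abs_nonneg a) k.cast_nonneg ha
    _ = 1600 * c * 6 * Real.exp (u / 2) * u * (1 + (k:ℝ)) ^ (-1 - 1 / u + 1 / (2 * u)) := by
        rw [Real.rpow_add (by positivity), hB]
        ring
    _ = _ := by
        congr 2
        field_simp
        ring

lemma exists_abs_integral_re_mul_re_le (hRH : RiemannHypothesis) : ∃ c > 0, ∀ u : ℝ, 1 ≤ u →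
    |∫ t : ℝ, (psiErrorTransform ((1 / 2 + 1 / u : ℝ) + t * I)).re *
        (averageKernel u (Real.exp (-u / 2)) ((1 / 2 + 1 / u : ℝ) + t * I)).re| ≤
      c * Real.exp (u / 2) * u ^ 2 := by
  obtain ⟨c, hc, hunit⟩ := exists_integral_unitInterval_le hRH
  refine ⟨6 * c, by positivity, fun u hu => ?_⟩
  have hu0 : 0 < u := by linarith
  have hσ : 1 / 2 < 1 / 2 + 1 / u := lt_add_of_pos_right _ (by positivity)
  have hint : Integrable fun t : ℝ => |(psiErrorTransform ((1 / 2 + 1 / u : ℝ) + t * I)).re *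
      (averageKernel u (Real.exp (-u / 2)) ((1 / 2 + 1 / u : ℝ) + t * I)).re| := by
    refine (integrable_psiErrorTransform_mul_averageKernel hRH hu0.le (Real.exp_pos (-u / 2))
      hσ).norm.mono' (continuous_re_mul_re hRH hσ _ _).abs.aestronglyMeasurable
      (Eventually.of_forall fun t => ?_)
    rw [norm_mul, Real.norm_eq_abs, abs_abs, abs_mul]
    gcongr <;> exact abs_re_le_norm _
  calc _ ≤ ∫ t : ℝ, |(psiErrorTransform ((1 / 2 + 1 / u : ℝ) + t * I)).re *
        (averageKernel u (Real.exp (-u / 2)) ((1 / 2 + 1 / u : ℝ) + t * I)).re| :=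
        abs_integral_le_integral_abs
    _ ≤ 2 * (c * Real.exp (u / 2) * u * (3 * u)) := by
        refine integral_le_two_mul_of_unitInterval_le hint
          (B := fun k => c * Real.exp (u / 2) * u * (1 + (k:ℝ)) ^ (-1 - 1 / (2 * u)))
          (fun k => hunit u hu k k ?_ fun t ht => ht.1.trans (le_abs_self t)) (fun k => ?_)
          fun N => ?_
        · rw [abs_of_nonneg k.cast_nonneg]
          linarith
        · have hk := hunit u hu k (-(k + 1)) (by rw [abs_neg, abs_of_nonneg (by positivity)])
            fun t ht => le_trans (by linarith [ht.2]) (neg_le_abs t)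
          rwa [show (-(k + 1) + 1 : ℝ) = -k by ring] at hk
        · rw [← Finset.mul_sum]
          gcongr
          refine (sum_one_add_rpow_le (by positivity) N).trans ?_
          rw [one_div_one_div]
          linarith
    _ = 6 * c * Real.exp (u / 2) * u ^ 2 := by ring

lemma exists_abs_psiErrorPrimitive_average_le (hRH : RiemannHypothesis) : ∃ c > 0, ∀ u : ℝ, 1 ≤ u →
    |(psiErrorPrimitive (Real.exp (u + Real.exp (-u / 2))) - psiErrorPrimitive (Real.exp u)) /
      Real.exp (-u / 2)| ≤ c * Real.exp (u / 2) * u ^ 2 := by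
  obtain ⟨c, hc, hintegral⟩ := exists_abs_integral_re_mul_re_le hRH
  refine ⟨c + |psiErrorPrimitive (Real.exp 1)|, by positivity, fun u hu => ?_⟩
  have hδ₀ : 0 < 1 / u := by positivity
  have hδ₁ : 1 / u ≤ 1 := (div_le_one (by linarith)).2 hu
  set J := ∫ t : ℝ, (psiErrorTransform ((1 / 2 + 1 / u : ℝ) + t * I)).re *
    (averageKernel u (Real.exp (-u / 2)) ((1 / 2 + 1 / u : ℝ) + t * I)).re with hJ
  set A := (psiErrorPrimitive (Real.exp (u + Real.exp (-u / 2))) - psiErrorPrimitive (Real.exp u)) /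
      Real.exp (-u / 2) with hA
  have hformula : A - psiErrorPrimitive (Real.exp 1) = 1 / Real.pi * J := by
    have hre := congrArg re (psiErrorPrimitive_average_eq_integral one_lt_two u
      (Real.exp_pos (-u / 2)).ne')
    have hscalar : (1 / (2 * Real.pi) : ℂ) = (1 / (2 * Real.pi) : ℝ) := by push_cast; rfl
    rw [ofReal_re, hscalar, re_ofReal_mul, re_integral_psiErrorTransform_mul_averageKernel hRH
      (by linarith) (Real.exp_pos _) (σ := 1 / 2 + 1 / u) (by linarith) (by linarith), ← hJ] at hre
    rw [hA, hre]
    field_simp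
  have hone : 1 ≤ Real.exp (u / 2) * u ^ 2 :=
    one_le_mul_of_one_le_of_one_le (Real.one_le_exp (by linarith)) (one_le_pow₀ hu)
  have hpi : 1 / Real.pi ≤ 1 := (div_le_one Real.pi_pos).2 (by linarith [Real.pi_gt_three])
  calc |A| = |1 / Real.pi * J + psiErrorPrimitive (Real.exp 1)| := by
        rw [← hformula, sub_add_cancel]
    _ ≤ 1 / Real.pi * |J| + |psiErrorPrimitive (Real.exp 1)| := by
        refine (abs_add_le _ _).trans_eq ?_
        rw [abs_mul, abs_of_pos (one_div_pos.2 Real.pi_pos)]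
    _ ≤ 1 * (c * Real.exp (u / 2) * u ^ 2) +
          |psiErrorPrimitive (Real.exp 1)| * (Real.exp (u / 2) * u ^ 2) := by
        gcongr
        · exact hintegral u hu
        · exact le_mul_of_one_le_right (abs_nonneg _) hone
    _ = (c + |psiErrorPrimitive (Real.exp 1)|) * Real.exp (u / 2) * u ^ 2 := by ring

lemma average_psiErrorPrimitive_mem_Icc {u h : ℝ} (hu : 0 ≤ u) (hh : 0 < h) :
    (psiErrorPrimitive (Real.exp (u + h)) - psiErrorPrimitive (Real.exp u)) / h ∈
      Icc (Chebyshev.psi (Real.exp u) - Real.exp (u + h))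
        (Chebyshev.psi (Real.exp (u + h)) - Real.exp u) := by
  have hle : Real.exp u ≤ Real.exp (u + h) := Real.exp_le_exp.2 (by linarith)
  have hdiff : psiErrorPrimitive (Real.exp (u + h)) - psiErrorPrimitive (Real.exp u) =
      ∫ t in (Real.exp u)..(Real.exp (u + h)), (Chebyshev.psi t - t) / t := by
    rw [psiErrorPrimitive_of_one_le (Real.one_le_exp hu),
      psiErrorPrimitive_of_one_le (Real.one_le_exp (by linarith))]
    exact intervalIntegral.integral_interval_sub_left (intervalIntegrable_psi_sub_self_div _ _)
      (intervalIntegrable_psi_sub_self_div _ _)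
  have hconst (m : ℝ) : ∫ t in (Real.exp u)..(Real.exp (u + h)), m / t = m * h := by
    simp only [div_eq_mul_inv]
    rw [intervalIntegral.integral_const_mul,
      integral_inv_of_pos (Real.exp_pos _) (Real.exp_pos _), ← Real.exp_sub, Real.log_exp,
      add_sub_cancel_left]
  have hint (m : ℝ) : IntervalIntegrable (fun t => m / t) volume (Real.exp u)
      (Real.exp (u + h)) := by
    refine ContinuousOn.intervalIntegrable_of_Icc hle (continuousOn_const.div continuousOn_id ?_)
    exact fun t ht => ((Real.exp_pos u).trans_le ht.1).ne'
  have hnonneg {t : ℝ} (ht : t ∈ Icc (Real.exp u) (Real.exp (u + h))) : 0 ≤ t :=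
    (Real.exp_pos u).le.trans ht.1
  rw [mem_Icc, hdiff, le_div_iff₀ hh, div_le_iff₀ hh, ← hconst, ← hconst]
  exact ⟨intervalIntegral.integral_mono_on hle (hint _) (intervalIntegrable_psi_sub_self_div _ _)
      fun t ht => div_le_div_of_nonneg_right
        (sub_le_sub (Chebyshev.psi_mono ht.1) ht.2) (hnonneg ht),
    intervalIntegral.integral_mono_on hle (intervalIntegrable_psi_sub_self_div _ _) (hint _)
      fun t ht => div_le_div_of_nonneg_right
        (sub_le_sub (Chebyshev.psi_mono ht.2) ht.1) (hnonneg ht)⟩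

lemma exp_add_exp_neg_half_le {u : ℝ} (hu : 0 ≤ u) :
    Real.exp (u + Real.exp (-u / 2)) ≤ Real.exp u + 2 * Real.exp (u / 2) := by
  have hpos := Real.exp_pos (-u / 2)
  have hexp : Real.exp (Real.exp (-u / 2)) ≤ 1 + 2 * Real.exp (-u / 2) := by
    have hlinear := Real.abs_exp_sub_one_le (x := Real.exp (-u / 2)) (by
      rw [abs_of_pos hpos]
      exact Real.exp_le_one_iff.2 (by linarith))
    rw [abs_of_pos hpos] at hlinear
    linarith [le_of_abs_le hlinear]
  calc Real.exp (u + Real.exp (-u / 2)) ≤ Real.exp u * (1 + 2 * Real.exp (-u / 2)) := by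
        rw [Real.exp_add]
        gcongr
    _ = Real.exp u + 2 * Real.exp (u + -u / 2) := by
        rw [Real.exp_add]
        ring
    _ = Real.exp u + 2 * Real.exp (u / 2) := by
        congr 3
        ring

lemma exists_add_exp_neg_half_eq {w : ℝ} (hw : 1 ≤ w) :
    ∃ u ∈ Icc (w - 1) w, u + Real.exp (-u / 2) = w := by
  have hcont : ContinuousOn (fun u : ℝ => u + Real.exp (-u / 2)) (Icc (w - 1) w) := by fun_prop
  refine intermediate_value_Icc (by linarith) hcont ⟨?_, ?_⟩
  · linarith [Real.exp_le_one_iff.2 (by linarith : -(w - 1) / 2 ≤ 0)]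
  · linarith [Real.exp_pos (-w / 2)]

lemma mul_exp_mul_sq_add_le {c u w : ℝ} (hc : 0 ≤ c) (hu : 1 ≤ u) (huw : u ≤ w) :
    c * Real.exp (u / 2) * u ^ 2 + 2 * Real.exp (u / 2) ≤
      (c + 2) * Real.exp (w / 2) * w ^ 2 :=
  calc c * Real.exp (u / 2) * u ^ 2 + 2 * Real.exp (u / 2) =
        c * Real.exp (u / 2) * u ^ 2 + 2 * Real.exp (u / 2) * 1 := by rw [mul_one]
    _ ≤ c * Real.exp (u / 2) * u ^ 2 + 2 * Real.exp (u / 2) * u ^ 2 := by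
        gcongr
        exact one_le_pow₀ hu
    _ = (c + 2) * Real.exp (u / 2) * u ^ 2 := by ring
    _ ≤ (c + 2) * Real.exp (w / 2) * w ^ 2 := by gcongr

/- Since `ψ` is monotone, averages over the windows `[u, u + e^(-u/2)]` ending and starting at `w`
bound `ψ (e^w)` from below and from above. -/
lemma exists_abs_psi_exp_sub_exp_le (hRH : RiemannHypothesis) : ∃ c > 0, ∀ w : ℝ, 2 ≤ w →
    |Chebyshev.psi (Real.exp w) - Real.exp w| ≤ c * Real.exp (w / 2) * w ^ 2 := by
  obtain ⟨c, hc, haverage⟩ := exists_abs_psiErrorPrimitive_average_le hRH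
  refine ⟨c + 2, by positivity, fun w hw => abs_le.2 ⟨?_, ?_⟩⟩
  · obtain ⟨u, ⟨hu, huw⟩, hadd⟩ := exists_add_exp_neg_half_eq (by linarith : 1 ≤ w)
    have hupper := (average_psiErrorPrimitive_mem_Icc (u := u) (by linarith)
      (Real.exp_pos (-u / 2))).2
    have hlower := neg_le_of_abs_le (haverage u (by linarith))
    have hshift := exp_add_exp_neg_half_le (u := u) (by linarith)
    rw [hadd] at hupper hlower hshift
    linarith [mul_exp_mul_sq_add_le hc.le (by linarith) huw]
  · linarith [(average_psiErrorPrimitive_mem_Icc (u := w) (by linarith)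
        (Real.exp_pos (-w / 2))).1, le_of_abs_le (haverage w (by linarith)),
      exp_add_exp_neg_half_le (u := w) (by linarith),
      mul_exp_mul_sq_add_le hc.le (by linarith) (le_refl w)]

theorem isBigO_psi_sub_self_of_riemannHypothesis (hRH : RiemannHypothesis) :
    (fun x => Chebyshev.psi x - x) =O[𝓟 (Ici 2)] fun x => √x * Real.log x ^ 2 := by
  obtain ⟨c, hc, hexp⟩ := exists_abs_psi_exp_sub_exp_le hRH
  refine Asymptotics.isBigO_principal.2 ⟨c + 512, fun x (hx : 2 ≤ x) => ?_⟩
  have hx0 : 0 < x := by linarith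
  rw [Real.norm_eq_abs, Real.norm_of_nonneg (by positivity), ← mul_assoc]
  rcases le_total 2 (Real.log x) with hlarge | hsmall
  · have hbound := hexp _ hlarge
    rw [Real.exp_half, Real.exp_log hx0] at hbound
    refine hbound.trans ?_
    gcongr
    linarith
  · have hx16 : x ≤ 16 := by
      have hexp_two : Real.exp 2 = Real.exp 1 ^ 2 := by rw [← Real.exp_nat_mul]; norm_num
      calc x ≤ Real.exp 2 := (Real.log_le_iff_le_exp hx0).1 hsmall
        _ ≤ 4 ^ 2 := by
            rw [hexp_two]
            gcongr
            linarith [Real.exp_one_lt_d9]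
        _ = 16 := by norm_num
    calc |Chebyshev.psi x - x| ≤ 512 * 1 * (1 / 2) ^ 2 := by
          linarith [abs_psi_sub_self_le hx0.le]
      _ ≤ (c + 512) * √x * Real.log x ^ 2 := by
          gcongr
          · linarith
          · exact Real.one_le_sqrt.2 (by linarith)
          · exact (half_lt_log hx).le

end PsiBound

section VonKochBound

open Real Set Filter

theorem riemannHypothesis_iff_isBigO_primePi_sub_Li :
    RiemannHypothesis ↔ (fun x => primePi x - Li x) =O[𝓟 (Ici 2)] fun x => √x * log x :=
  ⟨fun hRH => isBigO_psi_sub_self_iff_primePi.1 (isBigO_psi_sub_self_of_riemannHypothesis hRH),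
    fun hLi => riemannHypothesis_of_isBigO_psi_sub_self (isBigO_psi_sub_self_iff_primePi.2 hLi)⟩

lemma isBigO_sqrt_mul_log_iff {f : ℝ → ℝ} :
    (f =O[𝓟 (Ici 2)] fun x => √x * log x) ↔
      ∃ C : ℝ, 0 < C ∧ ∀ x : ℝ, 2 ≤ x → |f x| ≤ C * √x * log x := by
  have hbound {C x : ℝ} (hx : 2 ≤ x) :
      ‖f x‖ ≤ C * ‖√x * log x‖ ↔ |f x| ≤ C * √x * log x := by
    have hlog : 0 ≤ log x := log_nonneg (by linarith)
    rw [norm_eq_abs, norm_of_nonneg (by positivity : 0 ≤ √x * log x), mul_assoc]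
  simp only [Asymptotics.isBigO_iff', eventually_principal, mem_Ici]
  exact exists_congr fun C => and_congr_right fun _ => forall₂_congr fun x hx => hbound hx

end VonKochBound

end VonKoch

/-- Von Koch's theorem: the Riemann hypothesis holds if and only if there exists a constant
`C > 0` with `|π(x) − Li(x)| ≤ C·√x·log x` for all real `x ≥ 2`. -/
theorem riemannHypothesis_iff_vonKoch :
    RiemannHypothesis ↔
      ∃ C : ℝ, 0 < C ∧ ∀ x : ℝ, 2 ≤ x →
        |primePi x - Li x| ≤ C * Real.sqrt x * Real.log x :=
  VonKoch.riemannHypothesis_iff_isBigO_primePi_sub_Li.trans VonKoch.isBigO_sqrt_mul_log_iff
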